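/- Let F be a balanced double-well potential and let c > 0. There is no C³ solution u : ℝ² → ℝ of Δu + c ∂u/∂y = F'(u) with |u| ≤ 1 and ∂u/∂y > 0 everywhere whose pointwise limits u⁺(x) := lim_{y→+∞} u(x,y) and u⁻(x) := lim_{y→−∞} u(x,y) exist for every x and realize any of the following six configurations for some constants K₁, K₂ ∈ ℝ: (1) u⁺(x) = g(x − K₁) and u⁻ ≡ −1; (2) u⁺(x) = g(K₁ − x) and u⁻ ≡ −1; (3) u⁺ ≡ 1 and u⁻(x) = g(x − K₂); (4) u⁺ ≡ 1 and u⁻(x) = g(K₂ − x); (5) u⁺(x) = g(x − K₁), u⁻(x) = g(x − K₂) with K₁ < K₂; (6) u⁺(x) = g(K₁ − x), u⁻(x) = g(K₂ − x) with K₁ > K₂. -/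

import Mathlib

open Real Filter MeasureTheory Metric

noncomputable def pdx (u : ℝ → ℝ → ℝ) (x y : ℝ) : ℝ := deriv (fun t => u t y) x

noncomputable def pdy (u : ℝ → ℝ → ℝ) (x y : ℝ) : ℝ := deriv (fun t => u x t) y

noncomputable def pdxx (u : ℝ → ℝ → ℝ) (x y : ℝ) : ℝ := deriv (fun t => pdx u t y) x

noncomputable def pdyy (u : ℝ → ℝ → ℝ) (x y : ℝ) : ℝ := deriv (fun t => pdy u x t) y

/-- `F` is a balanced double-well potential. -/
def BalancedDoubleWell (F : ℝ → ℝ) : Prop :=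
  ContDiff ℝ 3 F ∧ deriv F (-1) = 0 ∧ deriv F 1 = 0 ∧
  0 < deriv (deriv F) (-1) ∧ 0 < deriv (deriv F) 1 ∧
  (∀ s ∈ Set.Ioo (-1 : ℝ) 0, 0 < deriv F s) ∧
  (∀ s ∈ Set.Ioo (0 : ℝ) 1, deriv F s < 0) ∧
  F (-1) = 0 ∧ F 1 = 0

/-- `u` is a `C³` solution of `Δu + c uᵧ = F'(u)` on `ℝ²` with `|u| ≤ 1`
which is monotone in `y`. -/
def IsSolution (F : ℝ → ℝ) (c : ℝ) (u : ℝ → ℝ → ℝ) : Prop :=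
  ContDiff ℝ 3 (fun p : ℝ × ℝ => u p.1 p.2) ∧
  (∀ x y : ℝ, pdxx u x y + pdyy u x y + c * pdy u x y = deriv F (u x y)) ∧
  (∀ x y : ℝ, |u x y| ≤ 1) ∧
  (∀ x y : ℝ, 0 < pdy u x y)

/-- A monotone traveling wave solution connecting `-1` to `1`. -/
def IsTravelingWave (F : ℝ → ℝ) (c : ℝ) (u : ℝ → ℝ → ℝ) : Prop :=
  IsSolution F c u ∧
  (∀ x : ℝ, Tendsto (fun y => u x y) atTop (nhds 1)) ∧
  (∀ x : ℝ, Tendsto (fun y => u x y) atBot (nhds (-1)))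

/-!
Reflecting the configuration in `x` if necessary, the nonconstant limits increase in `x`. Comparing
`u` with its reflection in a vertical line `x = l`, by means of the maximum principle near the wells
and vertical shifts of the reflection elsewhere, then gives `u_x ≥ 0`. Next `u(x, y) → 1` as
`x → ∞` for every `y`: this is immediate when the lower limit is a front; when the upper limit is
one, a gap `u(·, y₂) - u(·, y) ≥ d > 0` along a half-line would dissipate an energy
`c ∬ u_y²` proportional to the length of the rectangle, whereas the energy flux through its
boundary grows at an arbitrarily small rate. Finally the flux of the field
`e^{cy} ((u_x² - u_y²) / 2 - F(u), u_x u_y)`, which is divergence free, through the boundary of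
`[x₁, x₂] × [y, 0]` shows, as `x₁ → -∞` and `x₂ → ∞`, that `∫ u_x u_y dx` on the line `y = 0` is at
most a multiple of `e^{cy}` for every `y ≤ 0`. Hence it is zero, although the integrand is
nonnegative and somewhere positive.
-/

theorem deriv_eq_and_second_deriv_le_of_le_quadratic {f f' : ℝ → ℝ} {a d ξ ε : ℝ}
    (hf : ∀ s, HasDerivAt f (f' s) s) (hf' : HasDerivAt f' d a)
    (hle : ∀ᶠ s in nhds a, f s ≤ f a + (ξ * (s - a) + ε * (s - a) ^ 2)) :
    f' a = ξ ∧ d ≤ 2 * ε := by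
  have first_order (κ s : ℝ) : HasDerivAt (fun s => f s - (ξ * (s - a) + κ * (s - a) ^ 2))
      (f' s - (ξ + κ * (2 * (s - a)))) s := by
    have hs : HasDerivAt (fun s => s - a) 1 s := (hasDerivAt_id s).sub_const a
    exact ((hf s).sub ((hs.const_mul ξ).add ((hs.pow 2).const_mul κ))).congr_deriv (by ring)
  have hmax : IsLocalMax (fun s => f s - (ξ * (s - a) + ε * (s - a) ^ 2)) a := by
    filter_upwards [hle] with s hs
    simp only [sub_self]
    linarith
  have hξ : f' a = ξ := by simpa [sub_eq_zero] using hmax.hasDerivAt_eq_zero (first_order ε a)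
  refine ⟨hξ, ?_⟩
  by_contra! hd
  obtain ⟨κ, hεκ, hκd⟩ := exists_between (show ε < d / 2 by linarith)
  have hmin : IsLocalMin (fun s => f s - (ξ * (s - a) + κ * (s - a) ^ 2)) a := by
    have hderiv := funext fun s => (first_order κ s).deriv
    refine isLocalMin_of_deriv_deriv_pos ?_ ?_ (first_order κ a).continuousAt
    · have hs : HasDerivAt (fun s => s - a) 1 a := (hasDerivAt_id a).sub_const a
      rw [hderiv, (hf'.fun_sub (((hs.const_mul 2).const_mul κ).const_add ξ)).deriv]
      linarith
    · simp [hderiv, hξ]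
  have : ∀ᶠ _ in nhdsWithin a {a}ᶜ, False := by
    filter_upwards [nhdsWithin_le_nhds hle, nhdsWithin_le_nhds hmin, self_mem_nhdsWithin]
      with s hle hge hne
    have : 0 < (s - a) ^ 2 := by have := sub_ne_zero.2 hne; positivity
    simp only [sub_self] at hge
    nlinarith
  exact this.exists.choose_spec

theorem exists_isMaxOn_sub_sum_sq {ι : Type*} [Fintype ι] {S : Set (ι → ℝ)} {f : (ι → ℝ) → ℝ}
    (hS : IsClosed S) (hf : ContinuousOn f S) (hbdd : BddAbove (f '' S)) {p : ι → ℝ} (hp : p ∈ S)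
    {r : ℝ} (hr : 0 < r) : ∃ q ∈ S, IsMaxOn (fun z => f z - r * ∑ i, (z i - p i) ^ 2) S q := by
  obtain ⟨B, hB⟩ := hbdd
  have hcont : Continuous fun z : ι → ℝ => r * ∑ i, (z i - p i) ^ 2 := by fun_prop
  refine (hf.sub hcont.continuousOn).exists_isMaxOn' hS hp ?_
  have hfar : ∀ᶠ z in cocompact (ι → ℝ), √((B - f p) / r) < dist p z :=
    (tendsto_dist_left_cocompact_atTop p).eventually_gt_atTop _
  filter_upwards [hfar.filter_mono inf_le_left, mem_inf_of_right (mem_principal_self S)]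
    with z hz hzS
  obtain ⟨i, hi⟩ : ∃ i, √((B - f p) / r) < dist (p i) (z i) := by
    by_contra! h
    exact hz.not_ge ((dist_pi_le_iff (Real.sqrt_nonneg _)).2 h)
  have hsq : (B - f p) / r < (z i - p i) ^ 2 := by
    rwa [Real.sqrt_lt' ((Real.sqrt_nonneg _).trans_lt hi), dist_comm, Real.dist_eq, sq_abs] at hi
  have hsum : B - f p < r * ∑ i, (z i - p i) ^ 2 := by
    rw [div_lt_iff₀' hr] at hsq
    refine hsq.trans_le (mul_le_mul_of_nonneg_left ?_ hr.le)
    exact Finset.single_le_sum (f := fun i => (z i - p i) ^ 2) (fun i _ => sq_nonneg _)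
      (Finset.mem_univ i)
  have hfB : f z ≤ B := hB ⟨z, hzS, rfl⟩
  have hp0 : r * ∑ i, (p i - p i) ^ 2 = 0 := by simp
  change f z - r * ∑ i, (z i - p i) ^ 2 ≤ f p - r * ∑ i, (p i - p i) ^ 2
  linarith

/-- A quantitative form of the Omori–Yau almost maximum principle. -/
theorem exists_le_paraboloid {ι : Type*} [Fintype ι] {S : Set (ι → ℝ)} {f : (ι → ℝ) → ℝ}
    (hS : IsClosed S) (hf : ContinuousOn f S) (hbdd : BddAbove (f '' S)) {p : ι → ℝ} (hp : p ∈ S)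
    {ε : ℝ} (hε : 0 < ε) :
    ∃ q ∈ S, f p ≤ f q ∧ ∃ ξ : ι → ℝ, (∀ i, |ξ i| ≤ ε) ∧
      ∀ z ∈ S, f z ≤ f q + ∑ i, (ξ i * (z i - q i) + ε * (z i - q i) ^ 2) := by
  obtain ⟨B, hB⟩ := hbdd
  have hfB {z : ι → ℝ} (hz : z ∈ S) : f z ≤ B := hB ⟨z, hz, rfl⟩
  obtain ⟨r, hr, hrε, hrB⟩ : ∃ r : ℝ, 0 < r ∧ r ≤ ε ∧ 4 * r * (B - f p) ≤ ε ^ 2 := by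
    have hden : 0 < 4 * (B - f p) + ε := by linarith [hfB hp]
    refine ⟨ε ^ 2 / (4 * (B - f p) + ε), by positivity, ?_, ?_⟩
    · rw [div_le_iff₀ hden]
      nlinarith [hfB hp]
    · rw [mul_div_assoc', div_mul_eq_mul_div, div_le_iff₀ hden]
      nlinarith [hfB hp, sq_nonneg ε]
  obtain ⟨q, hqS, hq⟩ := exists_isMaxOn_sub_sum_sq hS hf ⟨B, hB⟩ hp hr
  have hmax (z : ι → ℝ) (hz : z ∈ S) :
      f z - r * ∑ i, (z i - p i) ^ 2 ≤ f q - r * ∑ i, (q i - p i) ^ 2 := hq hz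
  have hpq : f p ≤ f q - r * ∑ i, (q i - p i) ^ 2 := by simpa using hmax p hp
  have hsum : 0 ≤ r * ∑ i, (q i - p i) ^ 2 := by positivity
  refine ⟨q, hqS, by linarith, fun i => 2 * r * (q i - p i), fun i => ?_, fun z hz => ?_⟩
  · refine abs_le_of_sq_le_sq ?_ hε.le
    have hi : r * (q i - p i) ^ 2 ≤ r * ∑ i, (q i - p i) ^ 2 := by
      gcongr
      exact Finset.single_le_sum (f := fun i => (q i - p i) ^ 2) (fun i _ => sq_nonneg _)
        (Finset.mem_univ i)
    calc (2 * r * (q i - p i)) ^ 2 = 4 * r * (r * (q i - p i) ^ 2) := by ring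
      _ ≤ 4 * r * (B - f p) := by
        gcongr
        linarith [hfB hqS]
      _ ≤ ε ^ 2 := hrB
  · have hexpand : r * ∑ i, (z i - p i) ^ 2 - r * ∑ i, (q i - p i) ^ 2 =
        ∑ i, (2 * r * (q i - p i) * (z i - q i) + r * (z i - q i) ^ 2) := by
      rw [Finset.mul_sum, Finset.mul_sum, ← Finset.sum_sub_distrib]
      exact Finset.sum_congr rfl fun i _ => by ring
    calc f z ≤ f q + ∑ i, (2 * r * (q i - p i) * (z i - q i) + r * (z i - q i) ^ 2) := by
          linarith [hmax z hz]
      _ ≤ _ := by gcongr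

section PlaneCalculus

variable {c : ℝ} {u v P Q : ℝ → ℝ → ℝ}

theorem pdx_eq_fderiv (hu : Differentiable ℝ fun p : ℝ × ℝ => u p.1 p.2) (x y : ℝ) :
    pdx u x y = fderiv ℝ (fun p : ℝ × ℝ => u p.1 p.2) (x, y) (1, 0) :=
  ((hu (x, y)).hasFDerivAt.comp_hasDerivAt (f := fun t : ℝ => (t, y)) x
    ((hasDerivAt_id x).prodMk (hasDerivAt_const x y))).deriv

theorem pdy_eq_fderiv (hu : Differentiable ℝ fun p : ℝ × ℝ => u p.1 p.2) (x y : ℝ) :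
    pdy u x y = fderiv ℝ (fun p : ℝ × ℝ => u p.1 p.2) (x, y) (0, 1) :=
  ((hu (x, y)).hasFDerivAt.comp_hasDerivAt (f := fun t : ℝ => (x, t)) y
    ((hasDerivAt_const y x).prodMk (hasDerivAt_id y))).deriv

theorem hasDerivAt_pdx (hu : Differentiable ℝ fun p : ℝ × ℝ => u p.1 p.2) (x y : ℝ) :
    HasDerivAt (fun t => u t y) (pdx u x y) x :=
  (hu.comp (f := fun t : ℝ => (t, y)) (by fun_prop)).differentiableAt.hasDerivAt

theorem hasDerivAt_pdy (hu : Differentiable ℝ fun p : ℝ × ℝ => u p.1 p.2) (x y : ℝ) :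
    HasDerivAt (fun t => u x t) (pdy u x y) y :=
  (hu.comp (f := fun t : ℝ => (x, t)) (by fun_prop)).differentiableAt.hasDerivAt

theorem contDiff_pdx {m n : WithTop ℕ∞} (hu : ContDiff ℝ n fun p : ℝ × ℝ => u p.1 p.2)
    (hmn : m + 1 ≤ n) : ContDiff ℝ m fun p : ℝ × ℝ => pdx u p.1 p.2 := by
  have hd : Differentiable ℝ fun p : ℝ × ℝ => u p.1 p.2 :=
    (hu.of_le ((self_le_add_left 1 m).trans hmn)).differentiable one_ne_zero
  simp only [pdx_eq_fderiv hd]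
  exact (hu.fderiv_right hmn).clm_apply contDiff_const

theorem contDiff_pdy {m n : WithTop ℕ∞} (hu : ContDiff ℝ n fun p : ℝ × ℝ => u p.1 p.2)
    (hmn : m + 1 ≤ n) : ContDiff ℝ m fun p : ℝ × ℝ => pdy u p.1 p.2 := by
  have hd : Differentiable ℝ fun p : ℝ × ℝ => u p.1 p.2 :=
    (hu.of_le ((self_le_add_left 1 m).trans hmn)).differentiable one_ne_zero
  simp only [pdy_eq_fderiv hd]
  exact (hu.fderiv_right hmn).clm_apply contDiff_const

theorem hasDerivAt_pdxx (hu : ContDiff ℝ 2 fun p : ℝ × ℝ => u p.1 p.2) (x y : ℝ) :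
    HasDerivAt (fun t => pdx u t y) (pdxx u x y) x :=
  hasDerivAt_pdx ((contDiff_pdx (m := 1) hu (by norm_num)).differentiable one_ne_zero) x y

theorem hasDerivAt_pdyy (hu : ContDiff ℝ 2 fun p : ℝ × ℝ => u p.1 p.2) (x y : ℝ) :
    HasDerivAt (fun t => pdy u x t) (pdyy u x y) y :=
  hasDerivAt_pdy ((contDiff_pdy (m := 1) hu (by norm_num)).differentiable one_ne_zero) x y

theorem pdy_pdx_eq_pdx_pdy (hu : ContDiff ℝ 2 fun p : ℝ × ℝ => u p.1 p.2) (x y : ℝ) :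
    pdy (pdx u) x y = pdx (pdy u) x y := by
  have hd : Differentiable ℝ fun p : ℝ × ℝ => u p.1 p.2 := hu.differentiable two_ne_zero
  have hd2 : Differentiable ℝ (fderiv ℝ fun p : ℝ × ℝ => u p.1 p.2) :=
    (hu.fderiv_right (m := 1) (by norm_num)).differentiable one_ne_zero
  rw [pdy_eq_fderiv ((contDiff_pdx (m := 1) hu (by norm_num)).differentiable one_ne_zero),
    pdx_eq_fderiv ((contDiff_pdy (m := 1) hu (by norm_num)).differentiable one_ne_zero)]
  simp only [pdx_eq_fderiv hd, pdy_eq_fderiv hd]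
  have hsymm : IsSymmSndFDerivAt ℝ (fun p : ℝ × ℝ => u p.1 p.2) (x, y) :=
    hu.contDiffAt.isSymmSndFDerivAt (by simp)
  have second (v w : ℝ × ℝ) :
      fderiv ℝ (fun p => fderiv ℝ (fun p : ℝ × ℝ => u p.1 p.2) p v) (x, y) w =
        fderiv ℝ (fderiv ℝ fun p : ℝ × ℝ => u p.1 p.2) (x, y) w v := by
    rw [fderiv_clm_apply (hd2 _) (differentiableAt_const v)]
    simp
  exact (second _ _).trans ((hsymm _ _).trans (second _ _).symm)

theorem integral_pdx_add_pdy (hP : ContDiff ℝ 1 fun p : ℝ × ℝ => P p.1 p.2)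
    (hQ : ContDiff ℝ 1 fun p : ℝ × ℝ => Q p.1 p.2) (x₁ x₂ y₁ y₂ : ℝ) :
    ∫ x in x₁..x₂, ∫ y in y₁..y₂, (pdx P x y + pdy Q x y) =
      (((∫ x in x₁..x₂, Q x y₂) - ∫ x in x₁..x₂, Q x y₁) + ∫ y in y₁..y₂, P x₂ y) -
        ∫ y in y₁..y₂, P x₁ y := by
  have hPd := hP.differentiable one_ne_zero
  have hQd := hQ.differentiable one_ne_zero
  have := integral2_divergence_prod_of_hasFDerivAt _ _ _ _ x₁ y₁ x₂ y₂
    hP.continuous.continuousOn hQ.continuous.continuousOn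
    (fun p _ => (hPd p).hasFDerivAt) (fun p _ => (hQd p).hasFDerivAt)
    (ContinuousOn.integrableOn_compact (isCompact_uIcc.prod isCompact_uIcc)
      (Continuous.continuousOn
        (((hP.continuous_fderiv one_ne_zero).clm_apply continuous_const).add
        ((hQ.continuous_fderiv one_ne_zero).clm_apply continuous_const))))
  simpa only [pdx_eq_fderiv hPd, pdy_eq_fderiv hQd] using this

/-- The operator `Δ + c ∂/∂y` of the travelling wave equation. -/
noncomputable def waveOperator (c : ℝ) (u : ℝ → ℝ → ℝ) (x y : ℝ) : ℝ :=
  pdxx u x y + pdyy u x y + c * pdy u x y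

theorem waveOperator_eq_of_hasDerivAt {ux uy uxx uyy : ℝ → ℝ → ℝ}
    (hx : ∀ x y, HasDerivAt (fun t => u t y) (ux x y) x)
    (hy : ∀ x y, HasDerivAt (fun t => u x t) (uy x y) y)
    (hxx : ∀ x y, HasDerivAt (fun t => ux t y) (uxx x y) x)
    (hyy : ∀ x y, HasDerivAt (fun t => uy x t) (uyy x y) y) (x y : ℝ) :
    waveOperator c u x y = uxx x y + uyy x y + c * uy x y := by
  have hux : pdx u = ux := funext₂ fun x y => (hx x y).deriv
  have huy : pdy u = uy := funext₂ fun x y => (hy x y).deriv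
  simp only [waveOperator, pdxx, pdyy, hux, huy, (hxx _ _).deriv, (hyy _ _).deriv]

theorem waveOperator_sub (hu : ContDiff ℝ 2 fun p : ℝ × ℝ => u p.1 p.2)
    (hv : ContDiff ℝ 2 fun p : ℝ × ℝ => v p.1 p.2) (x y : ℝ) :
    waveOperator c (fun x y => u x y - v x y) x y =
      waveOperator c u x y - waveOperator c v x y := by
  have hu1 := hu.differentiable two_ne_zero
  have hv1 := hv.differentiable two_ne_zero
  rw [waveOperator_eq_of_hasDerivAt
    (fun x y => (hasDerivAt_pdx hu1 x y).fun_sub (hasDerivAt_pdx hv1 x y))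
    (fun x y => (hasDerivAt_pdy hu1 x y).fun_sub (hasDerivAt_pdy hv1 x y))
    (fun x y => (hasDerivAt_pdxx hu x y).fun_sub (hasDerivAt_pdxx hv x y))
    (fun x y => (hasDerivAt_pdyy hu x y).fun_sub (hasDerivAt_pdyy hv x y)),
    waveOperator, waveOperator]
  ring

theorem waveOperator_mul_fst {ψ : ℝ → ℝ} (hψ : ContDiff ℝ 2 ψ)
    (hu : ContDiff ℝ 2 fun p : ℝ × ℝ => u p.1 p.2) (x y : ℝ) :
    waveOperator c (fun x y => ψ x * u x y) x y =
      ψ x * waveOperator c u x y + 2 * deriv ψ x * pdx u x y + deriv (deriv ψ) x * u x y := by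
  have hu1 := hu.differentiable two_ne_zero
  have hψ1 (x : ℝ) : HasDerivAt ψ (deriv ψ x) x :=
    (hψ.differentiable two_ne_zero x).hasDerivAt
  have hψ2 (x : ℝ) : HasDerivAt (deriv ψ) (deriv (deriv ψ) x) x :=
    (hψ.differentiable_deriv_two x).hasDerivAt
  rw [waveOperator_eq_of_hasDerivAt
    (fun x y => (hψ1 x).fun_mul (hasDerivAt_pdx hu1 x y))
    (fun x y => (hasDerivAt_pdy hu1 x y).const_mul (ψ x))
    (fun x y => ((hψ2 x).fun_mul (hasDerivAt_pdx hu1 x y)).fun_add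
      ((hψ1 x).fun_mul (hasDerivAt_pdxx hu x y)))
    (fun x y => (hasDerivAt_pdyy hu x y).const_mul (ψ x)), waveOperator]
  ring

theorem waveOperator_reflect_shift (l s x y : ℝ) :
    waveOperator c (fun x y => u (l - x) (y + s)) x y = waveOperator c u (l - x) (y + s) := by
  have hx : pdx (fun x y => u (l - x) (y + s)) = fun x y => -pdx u (l - x) (y + s) :=
    funext₂ fun x y => deriv_comp_const_sub (fun t => u t (y + s)) l x
  have hy : pdy (fun x y => u (l - x) (y + s)) = fun x y => pdy u (l - x) (y + s) :=
    funext₂ fun x y => deriv_comp_add_const (u (l - x)) s y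
  simp only [waveOperator, pdxx, pdyy, hx, hy, deriv.fun_neg,
    deriv_comp_const_sub (fun t => pdx u t (y + s)), deriv_comp_add_const (pdy u (l - x)), neg_neg]

theorem waveOperator_neg_comp_neg (x y : ℝ) :
    waveOperator (-c) (fun x y => -u (-x) (-y)) x y = -waveOperator c u (-x) (-y) := by
  have hx : pdx (fun x y => -u (-x) (-y)) = fun x y => pdx u (-x) (-y) := by
    funext x y
    simp only [pdx, deriv.fun_neg, deriv_comp_neg (fun t => u t (-y)), neg_neg]
  have hy : pdy (fun x y => -u (-x) (-y)) = fun x y => pdy u (-x) (-y) := by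
    funext x y
    simp only [pdy, deriv.fun_neg, deriv_comp_neg (u (-x)), neg_neg]
  simp only [waveOperator, pdxx, pdyy, hx, hy, deriv_comp_neg (fun t => pdx u t (-y)),
    deriv_comp_neg (pdy u (-x))]
  ring

end PlaneCalculus

section MaximumPrinciple

variable {c l : ℝ} {v w : ℝ → ℝ → ℝ}

theorem exists_almost_critical (hv : ContDiff ℝ 2 fun p : ℝ × ℝ => v p.1 p.2) {B : ℝ}
    (hB : ∀ x ≤ l, ∀ y, v x y ≤ B) {x₀ y₀ : ℝ} (hx₀ : x₀ ≤ l) (hline : ∀ y, v l y < v x₀ y₀)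
    {ε : ℝ} (hε : 0 < ε) :
    ∃ x < l, ∃ y, v x₀ y₀ ≤ v x y ∧ |pdx v x y| ≤ ε ∧ |pdy v x y| ≤ ε ∧
      pdxx v x y ≤ 2 * ε ∧ pdyy v x y ≤ 2 * ε := by
  have hv1 := hv.differentiable two_ne_zero
  have hcont : Continuous fun z : Fin 2 → ℝ => v (z 0) (z 1) :=
    hv.continuous.comp (f := fun z : Fin 2 → ℝ => (z 0, z 1)) (by fun_prop)
  obtain ⟨q, hq, hpq, ξ, hξ, htouch⟩ := exists_le_paraboloid (S := {z : Fin 2 → ℝ | z 0 ≤ l})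
    (isClosed_le (continuous_apply 0) continuous_const) hcont.continuousOn
    ⟨B, Set.forall_mem_image.2 fun z hz => hB _ hz _⟩ (p := ![x₀, y₀]) hx₀ hε
  replace hpq : v x₀ y₀ ≤ v (q 0) (q 1) := hpq
  have hql : q 0 < l := lt_of_le_of_ne hq fun h => (hpq.trans_lt (h ▸ hline (q 1))).false
  obtain ⟨hx, hxx⟩ := deriv_eq_and_second_deriv_le_of_le_quadratic
    (fun x => hasDerivAt_pdx hv1 x (q 1)) (hasDerivAt_pdxx hv (q 0) (q 1)) <| by
      filter_upwards [eventually_le_nhds hql] with s hs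
      simpa [Fin.sum_univ_two] using htouch ![s, q 1] hs
  obtain ⟨hy, hyy⟩ := deriv_eq_and_second_deriv_le_of_le_quadratic
    (fun y => hasDerivAt_pdy hv1 (q 0) y) (hasDerivAt_pdyy hv (q 0) (q 1)) <|
      Eventually.of_forall fun s => by simpa [Fin.sum_univ_two] using htouch ![q 0, s] hq
  exact ⟨q 0, hql, q 1, hpq, hx ▸ hξ 0, hy ▸ hξ 1, hxx, hyy⟩

theorem nonpos_of_drift_inequality {b : ℝ → ℝ} {M B k : ℝ}
    (hv : ContDiff ℝ 2 fun p : ℝ × ℝ => v p.1 p.2) (hB : ∀ x ≤ l, ∀ y, v x y ≤ B)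
    (hline : ∀ y, v l y ≤ 0) (hb : ∀ x ≤ l, |b x| ≤ M) (hk : 0 < k)
    (hLv : ∀ x < l, ∀ y, 0 < v x y → k * v x y ≤ waveOperator c v x y + b x * pdx v x y) :
    ∀ x ≤ l, ∀ y, v x y ≤ 0 := by
  intro x₀ hx₀ y₀
  by_contra! hpos
  have hM : 0 ≤ M := (abs_nonneg _).trans (hb l le_rfl)
  obtain ⟨ε, hε, hε_lt⟩ := exists_pos_mul_lt (mul_pos hk hpos) (4 + |c| + M)
  obtain ⟨x, hx, y, hxy, hvx, hvy, hvxx, hvyy⟩ :=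
    exists_almost_critical hv hB hx₀ (fun y => (hline y).trans_lt hpos) hε
  have hcy : c * pdy v x y ≤ |c| * ε := (le_abs_self _).trans (by rw [abs_mul]; gcongr)
  have hbx : b x * pdx v x y ≤ M * ε :=
    (le_abs_self _).trans (by rw [abs_mul]; gcongr; exact hb x hx.le)
  have : k * v x₀ y₀ ≤ (4 + |c| + M) * ε := calc
    k * v x₀ y₀ ≤ k * v x y := by gcongr
    _ ≤ waveOperator c v x y + b x * pdx v x y := hLv x hx y (hpos.trans_le hxy)
    _ ≤ (4 + |c| + M) * ε := by
      rw [waveOperator]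
      linarith
  exact this.not_gt hε_lt

theorem nonpos_of_barrier {ψ : ℝ → ℝ} {m M B k : ℝ} (hψ : ContDiff ℝ 2 ψ) (hψ0 : ∀ x, 0 < ψ x)
    (hm : 0 < m) (hψm : ∀ x ≤ l, m ≤ ψ x) (hψM : ∀ x ≤ l, |deriv ψ x| ≤ M * ψ x)
    (hw : ContDiff ℝ 2 fun p : ℝ × ℝ => w p.1 p.2)
    (hB : ∀ x ≤ l, ∀ y, w x y ≤ B) (hline : ∀ y, w l y ≤ 0) (hk : 0 < k)
    (hLw : ∀ x < l, ∀ y, 0 < w x y →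
      (deriv (deriv ψ) x / ψ x + k) * w x y ≤ waveOperator c w x y) :
    ∀ x ≤ l, ∀ y, w x y ≤ 0 := by
  obtain ⟨v, hv, rfl⟩ : ∃ v : ℝ → ℝ → ℝ, (ContDiff ℝ 2 fun p : ℝ × ℝ => v p.1 p.2) ∧
      w = fun x y => ψ x * v x y :=
    ⟨fun x y => w x y / ψ x, hw.div (hψ.comp contDiff_fst) fun p => (hψ0 p.1).ne',
      funext₂ fun x y => (mul_div_cancel₀ _ (hψ0 x).ne').symm⟩
  have hvB (x : ℝ) (hx : x ≤ l) (y : ℝ) : v x y ≤ |B| / m := by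
    rw [le_div_iff₀ hm]
    rcases le_or_gt 0 (v x y) with hxy | hxy
    · nlinarith [hB x hx y, hψm x hx, le_abs_self B]
    · nlinarith [abs_nonneg B]
  have hv_nonpos := nonpos_of_drift_inequality (c := c) (b := fun x => 2 * (deriv ψ x / ψ x))
    (M := 2 * M) hv hvB (fun y => nonpos_of_mul_nonpos_right (hline y) (hψ0 l))
    (fun x hx => ?_) hk fun x hx y hxy => ?_
  · exact fun x hx y => mul_nonpos_of_nonneg_of_nonpos (hψ0 x).le (hv_nonpos x hx y)
  · rw [abs_mul, abs_two, abs_div, abs_of_pos (hψ0 x)]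
    gcongr
    exact (div_le_iff₀ (hψ0 x)).2 (hψM x hx)
  · have h := hLw x hx y (mul_pos (hψ0 x) hxy)
    rw [waveOperator_mul_fst hψ hv, add_mul, ← mul_assoc, div_mul_cancel₀ _ (hψ0 x).ne'] at h
    refine le_of_mul_le_mul_left ?_ (hψ0 x)
    calc ψ x * (k * v x y) ≤ ψ x * waveOperator c v x y + 2 * deriv ψ x * pdx v x y := by linarith
      _ = ψ x * (waveOperator c v x y + 2 * (deriv ψ x / ψ x) * pdx v x y) := by
        field_simp [(hψ0 x).ne']

/-- A width of strip for which the one-sided maximum principle tolerates a zeroth order coefficient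
as low as `-K`. -/
noncomputable def stripWidth (K : ℝ) : ℝ := 1 / (12 * (K + 1))

theorem stripWidth_pos {K : ℝ} (hK : 0 ≤ K) : 0 < stripWidth K := by
  unfold stripWidth
  positivity

/-- The weight `exp (-e^{a (x - l)} / 2)`, which is concave on the half-line `x ≤ l` and strictly so
near `l`. -/
noncomputable def stripBarrier (a l x : ℝ) : ℝ := exp (-(exp (a * (x - l)) / 2))

theorem contDiff_stripBarrier {n : WithTop ℕ∞} (a l : ℝ) : ContDiff ℝ n (stripBarrier a l) := by
  unfold stripBarrier
  fun_prop

theorem hasDerivAt_exp_mul_sub (a l x : ℝ) :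
    HasDerivAt (fun x => exp (a * (x - l)) / 2) (a * (exp (a * (x - l)) / 2)) x :=
  (((((hasDerivAt_id' x).sub_const l).const_mul a).exp).div_const 2).congr_deriv (by ring)

theorem hasDerivAt_stripBarrier (a l x : ℝ) :
    HasDerivAt (stripBarrier a l) (-(a * (exp (a * (x - l)) / 2) * stripBarrier a l x)) x :=
  ((hasDerivAt_exp_mul_sub a l x).fun_neg.exp).congr_deriv (by rw [stripBarrier]; ring)

theorem deriv_stripBarrier (a l : ℝ) :
    deriv (stripBarrier a l) = fun x => -(a * (exp (a * (x - l)) / 2) * stripBarrier a l x) :=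
  funext fun x => (hasDerivAt_stripBarrier a l x).deriv

theorem deriv_deriv_stripBarrier_div (a l x : ℝ) :
    deriv (deriv (stripBarrier a l)) x / stripBarrier a l x =
      -(a ^ 2 * (exp (a * (x - l)) / 2 * (1 - exp (a * (x - l)) / 2))) := by
  have hψ : stripBarrier a l x ≠ 0 := (exp_pos _).ne'
  rw [deriv_stripBarrier, ((((hasDerivAt_exp_mul_sub a l x).const_mul a).fun_mul
    (hasDerivAt_stripBarrier a l x)).fun_neg).deriv]
  field_simp
  ring

theorem exp_mul_sub_le_half {a x : ℝ} (ha : 0 ≤ a) (hx : x ≤ l) :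
    exp (a * (x - l)) / 2 ≤ 1 / 2 := by
  gcongr
  exact exp_le_one_iff.2 (mul_nonpos_of_nonneg_of_nonpos ha (sub_nonpos.2 hx))

theorem le_stripBarrier {a x : ℝ} (ha : 0 ≤ a) (hx : x ≤ l) :
    exp (-(1 / 2)) ≤ stripBarrier a l x :=
  exp_le_exp.2 (neg_le_neg (exp_mul_sub_le_half ha hx))

theorem abs_deriv_stripBarrier_le {a x : ℝ} (ha : 0 ≤ a) (hx : x ≤ l) :
    |deriv (stripBarrier a l) x| ≤ a * stripBarrier a l x := by
  have hψ0 : 0 < stripBarrier a l x := exp_pos _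
  rw [deriv_stripBarrier, abs_neg, abs_of_nonneg (by positivity)]
  have : exp (a * (x - l)) / 2 ≤ 1 := (exp_mul_sub_le_half ha hx).trans (by norm_num)
  gcongr
  exact mul_le_of_le_one_right ha this

theorem deriv_deriv_stripBarrier_div_nonpos {a x : ℝ} (ha : 0 ≤ a) (hx : x ≤ l) :
    deriv (deriv (stripBarrier a l)) x / stripBarrier a l x ≤ 0 := by
  have : 0 ≤ 1 - exp (a * (x - l)) / 2 := by linarith [exp_mul_sub_le_half ha hx]
  rw [deriv_deriv_stripBarrier_div, neg_nonpos]
  positivity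

theorem deriv_deriv_stripBarrier_div_le {a x : ℝ} (ha : 0 ≤ a) (hx : x ≤ l)
    (hax : -1 ≤ a * (x - l)) :
    deriv (deriv (stripBarrier a l)) x / stripBarrier a l x ≤ -(a ^ 2 / 12) := by
  have hexp : (1 : ℝ) / 3 ≤ exp (-1) := by
    rw [exp_neg, one_div]
    exact inv_anti₀ (exp_pos 1) exp_one_lt_three.le
  have hE : 1 / 6 ≤ exp (a * (x - l)) / 2 := by linarith [exp_le_exp.2 hax]
  rw [deriv_deriv_stripBarrier_div, neg_le_neg_iff, div_eq_mul_one_div]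
  gcongr
  nlinarith [exp_mul_sub_le_half ha hx]

theorem nonpos_of_narrow_strip {K B κ : ℝ} (hK : 0 ≤ K)
    (hw : ContDiff ℝ 2 fun p : ℝ × ℝ => w p.1 p.2) (hB : ∀ x ≤ l, ∀ y, w x y ≤ B)
    (hline : ∀ y, w l y ≤ 0) (hκ : 0 < κ)
    (hstrip : ∀ x < l, ∀ y, 0 < w x y → l - stripWidth K ≤ x →
      -K * w x y ≤ waveOperator c w x y)
    (hfar : ∀ x < l, ∀ y, 0 < w x y → x < l - stripWidth K → κ * w x y ≤ waveOperator c w x y) :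
    ∀ x ≤ l, ∀ y, w x y ≤ 0 := by
  set a := 12 * (K + 1) with ha
  have ha0 : 0 ≤ a := by positivity
  have haK : K + 1 ≤ a ^ 2 / 12 := by
    rw [ha]
    nlinarith
  refine nonpos_of_barrier (c := c) (k := min κ 1) (contDiff_stripBarrier a l)
    (fun x => exp_pos _) (exp_pos _) (fun x hx => le_stripBarrier ha0 hx)
    (fun x hx => abs_deriv_stripBarrier_le ha0 hx) hw hB hline (lt_min hκ one_pos)
    fun x hx y hxy => ?_
  rcases le_or_gt (l - stripWidth K) x with hx' | hx'
  · have hax : -1 ≤ a * (x - l) := by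
      have : a * stripWidth K = 1 := mul_div_cancel₀ 1 (by positivity)
      nlinarith
    refine le_trans ?_ (hstrip x hx y hxy hx')
    gcongr
    linarith [deriv_deriv_stripBarrier_div_le ha0 hx.le hax, min_le_right κ 1]
  · refine le_trans ?_ (hfar x hx y hxy hx')
    gcongr
    linarith [deriv_deriv_stripBarrier_div_nonpos ha0 hx.le, min_le_left κ 1]

end MaximumPrinciple

section StrongMaximumPrinciple

variable {c l : ℝ} {d z : ℝ → ℝ → ℝ}

theorem waveOperator_nonneg_of_isLocalMin (hd : ContDiff ℝ 2 fun p : ℝ × ℝ => d p.1 p.2) {x y : ℝ}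
    (hmin : IsLocalMin (fun p : ℝ × ℝ => d p.1 p.2) (x, y)) : 0 ≤ waveOperator c d x y := by
  have hd1 := hd.differentiable two_ne_zero
  have hminx : ∀ᶠ s in nhds x, d x y ≤ d s y :=
    (Continuous.prodMk_left y).continuousAt.eventually hmin
  have hminy : ∀ᶠ s in nhds y, d x y ≤ d x s :=
    (Continuous.prodMk_right x).continuousAt.eventually hmin
  obtain ⟨-, hxx⟩ := deriv_eq_and_second_deriv_le_of_le_quadratic (ξ := 0) (ε := 0)
    (fun s => (hasDerivAt_pdx hd1 s y).fun_neg) (hasDerivAt_pdxx hd x y).fun_neg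
    (hminx.mono fun s hs => by linarith)
  obtain ⟨hy, hyy⟩ := deriv_eq_and_second_deriv_le_of_le_quadratic (ξ := 0) (ε := 0)
    (fun s => (hasDerivAt_pdy hd1 x s).fun_neg) (hasDerivAt_pdyy hd x y).fun_neg
    (hminy.mono fun s hs => by linarith)
  rw [waveOperator, neg_eq_zero.1 hy]
  linarith

theorem nonneg_on_compact_of_waveOperator_neg {D : Set (ℝ × ℝ)} (hD : IsCompact D)
    (hd : ContDiff ℝ 2 fun p : ℝ × ℝ => d p.1 p.2)
    (hneg : ∀ x y, (x, y) ∈ D → d x y < 0 → D ∈ nhds (x, y) ∧ waveOperator c d x y < 0)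
    {x y : ℝ} (hxy : (x, y) ∈ D) : 0 ≤ d x y := by
  obtain ⟨⟨x₁, y₁⟩, hp₁, hmin⟩ := hD.exists_isMinOn ⟨_, hxy⟩ hd.continuous.continuousOn
  refine le_trans ?_ (hmin hxy)
  by_contra! h
  obtain ⟨hnhds, hlt⟩ := hneg x₁ y₁ hp₁ h
  exact hlt.not_ge (waveOperator_nonneg_of_isLocalMin hd (hmin.isLocalMin hnhds))

/-- A barrier that vanishes on the parabola `x = x₀ - 1 + (y - y₀) ^ 2` and is positive to its
right; for large `α` it is a subsolution of `Δ + c ∂/∂y - K`. -/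
noncomputable def parabolicBarrier (τ α x₀ y₀ x y : ℝ) : ℝ :=
  τ * (exp (α * (x - x₀ + 1 - (y - y₀) ^ 2)) - 1)

theorem contDiff_parabolicBarrier {n : WithTop ℕ∞} (τ α x₀ y₀ : ℝ) :
    ContDiff ℝ n fun p : ℝ × ℝ => parabolicBarrier τ α x₀ y₀ p.1 p.2 := by
  unfold parabolicBarrier
  fun_prop

theorem waveOperator_parabolicBarrier (τ α x₀ y₀ x y : ℝ) :
    waveOperator c (parabolicBarrier τ α x₀ y₀) x y =
      (α ^ 2 - 2 * α + 4 * α ^ 2 * (y - y₀) ^ 2 - 2 * c * α * (y - y₀)) *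
        (parabolicBarrier τ α x₀ y₀ x y + τ) := by
  set E : ℝ → ℝ → ℝ := fun x y => τ * exp (α * (x - x₀ + 1 - (y - y₀) ^ 2)) with hE
  have hB (x y : ℝ) : parabolicBarrier τ α x₀ y₀ x y = E x y - τ := by
    rw [parabolicBarrier, hE]
    ring
  have hEx (x y : ℝ) : HasDerivAt (fun t => E t y) (α * E x y) x :=
    (((((((hasDerivAt_id' x).sub_const x₀).add_const 1).sub_const ((y - y₀) ^ 2)).const_mul
      α).exp).const_mul τ).congr_deriv (by ring)
  have hEy (x y : ℝ) : HasDerivAt (E x) (-2 * α * (y - y₀) * E x y) y :=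
    (((((((hasDerivAt_id' y).sub_const y₀).fun_pow 2).const_sub (x - x₀ + 1)).const_mul
      α).exp).const_mul τ).congr_deriv (by simp only [hE]; ring)
  have hlin (y : ℝ) : HasDerivAt (fun t => -2 * α * (t - y₀)) (-2 * α) y :=
    (((hasDerivAt_id' y).sub_const y₀).const_mul (-2 * α)).congr_deriv (mul_one _)
  rw [funext₂ hB, waveOperator_eq_of_hasDerivAt (fun x y => (hEx x y).sub_const τ)
    (fun x y => (hEy x y).sub_const τ) (fun x y => (hEx x y).const_mul α)
    (fun x y => (hlin y).fun_mul (hEy x y))]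
  ring

theorem lt_waveOperator_parabolicBarrier {K τ : ℝ} (hK : 0 ≤ K) (hτ : 0 < τ) (x₀ y₀ x y : ℝ) :
    K * (parabolicBarrier τ (3 + c ^ 2 + K) x₀ y₀ x y + τ) <
      waveOperator c (parabolicBarrier τ (3 + c ^ 2 + K) x₀ y₀) x y := by
  rw [waveOperator_parabolicBarrier]
  refine mul_lt_mul_of_pos_right ?_ ?_
  · nlinarith [sq_nonneg (2 * (3 + c ^ 2 + K) * (y - y₀) - c / 2), sq_nonneg c, sq_nonneg (c ^ 2),
      mul_nonneg hK (sq_nonneg c)]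
  · have := mul_pos hτ (exp_pos ((3 + c ^ 2 + K) * (x - x₀ + 1 - (y - y₀) ^ 2)))
    rw [parabolicBarrier]
    linarith

theorem parabolicBarrier_le {τ α : ℝ} (hτ : 0 ≤ τ) (hα : 0 ≤ α) (x₀ y₀ x y : ℝ) :
    parabolicBarrier τ α x₀ y₀ x y ≤ τ * exp (α * (x - x₀ + 1)) := by
  unfold parabolicBarrier
  gcongr
  refine (sub_le_self _ zero_le_one).trans (exp_le_exp.2 ?_)
  gcongr
  exact sub_le_self _ (sq_nonneg _)

/-- The part of the half-plane `x ≤ l` where `parabolicBarrier` is nonnegative. -/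
def parabolicCap (l x₀ y₀ : ℝ) : Set (ℝ × ℝ) :=
  {p | p.1 ≤ l ∧ 0 ≤ p.1 - x₀ + 1 - (p.2 - y₀) ^ 2}

theorem snd_mem_closedBall_of_mem_parabolicCap {x₀ y₀ x y : ℝ}
    (h : (x, y) ∈ parabolicCap l x₀ y₀) : y ∈ closedBall y₀ √(l - x₀ + 1) :=
  mem_closedBall_iff_norm.2 (Real.abs_le_sqrt (by linarith [h.1, h.2]))

theorem continuous_parabola (x₀ y₀ : ℝ) :
    Continuous fun p : ℝ × ℝ => p.1 - x₀ + 1 - (p.2 - y₀) ^ 2 := by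
  fun_prop

theorem isCompact_parabolicCap (l x₀ y₀ : ℝ) : IsCompact (parabolicCap l x₀ y₀) :=
  ((isCompact_Icc (a := x₀ - 1) (b := l)).prod
    (isCompact_closedBall y₀ √(l - x₀ + 1))).of_isClosed_subset
    ((isClosed_le continuous_fst continuous_const).inter
      (isClosed_le continuous_const (continuous_parabola x₀ y₀)))
    fun p hp => ⟨⟨by linarith [hp.2, sq_nonneg (p.2 - y₀)], hp.1⟩,
      snd_mem_closedBall_of_mem_parabolicCap hp⟩

theorem parabolicCap_mem_nhds {x₀ y₀ x y : ℝ} (hx : x < l)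
    (hy : 0 < x - x₀ + 1 - (y - y₀) ^ 2) : parabolicCap l x₀ y₀ ∈ nhds (x, y) :=
  mem_of_superset (((isOpen_lt continuous_fst continuous_const).inter
    (isOpen_lt continuous_const (continuous_parabola x₀ y₀))).mem_nhds ⟨hx, hy⟩)
    fun _ hp => ⟨hp.1.le, hp.2.le⟩

theorem pos_of_pos_on_line {K : ℝ} (hK : 0 ≤ K) (hz : ContDiff ℝ 2 fun p : ℝ × ℝ => z p.1 p.2)
    (hz0 : ∀ x ≤ l, ∀ y, 0 ≤ z x y) (hline : ∀ y, 0 < z l y)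
    (hLz : ∀ x < l, ∀ y, waveOperator c z x y ≤ K * z x y) {x₀ : ℝ} (hx₀ : x₀ ≤ l) (y₀ : ℝ) :
    0 < z x₀ y₀ := by
  obtain ⟨η, hη, hη_le⟩ := (isCompact_closedBall y₀ √(l - x₀ + 1)).exists_forall_le'
    (hz.continuous.comp (Continuous.prodMk_right l)).continuousOn (fun y _ => hline y)
  set α := 3 + c ^ 2 + K
  have hα0 : 0 < α := by positivity
  set τ := η / exp (α * (l - x₀ + 1))
  have hτ0 : 0 < τ := by positivity
  have hbarrier : 0 < parabolicBarrier τ α x₀ y₀ x₀ y₀ := by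
    refine mul_pos hτ0 (sub_pos.2 (one_lt_exp_iff.2 ?_))
    simpa using hα0
  refine hbarrier.trans_le (sub_nonneg.1 (nonneg_on_compact_of_waveOperator_neg (c := c)
    (d := fun x y => z x y - parabolicBarrier τ α x₀ y₀ x y) (isCompact_parabolicCap l x₀ y₀)
    (hz.sub (contDiff_parabolicBarrier τ α x₀ y₀)) (fun x y hcap hneg => ?_)
    ⟨hx₀, by simp⟩))
  have hx : x < l := by
    refine lt_of_le_of_ne hcap.1 fun (hxl : x = l) => ?_
    subst hxl
    have hle : parabolicBarrier τ α x₀ y₀ x y ≤ η :=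
      (parabolicBarrier_le hτ0.le hα0.le x₀ y₀ x y).trans_eq (div_mul_cancel₀ _ (exp_pos _).ne')
    have hge : η ≤ z x y := hη_le y (snd_mem_closedBall_of_mem_parabolicCap hcap)
    linarith
  have hy : 0 < x - x₀ + 1 - (y - y₀) ^ 2 := by
    refine hcap.2.lt_of_ne fun h0 => ?_
    rw [parabolicBarrier, ← h0, mul_zero, exp_zero, sub_self, mul_zero] at hneg
    linarith [hz0 x hx.le y]
  refine ⟨parabolicCap_mem_nhds hx hy, ?_⟩
  rw [waveOperator_sub hz (contDiff_parabolicBarrier τ α x₀ y₀), sub_neg]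
  calc waveOperator c z x y ≤ K * z x y := hLz x hx y
    _ ≤ K * (parabolicBarrier τ α x₀ y₀ x y + τ) := by gcongr; linarith
    _ < _ := lt_waveOperator_parabolicBarrier hK hτ0 x₀ y₀ x y

end StrongMaximumPrinciple

section GradientBound

variable {u : ℝ → ℝ → ℝ} {a b A B K : ℝ}

/-- The function of doubled variables which is maximized to bound `∂u/∂x` by `A`: the increment of
`u` across `[x - t, x + t]`, minus a concave function of `t` with slope `2 * A` at `t = 0`. -/
def doubledIncrement (A : ℝ) (u : ℝ → ℝ → ℝ) (x y t : ℝ) : ℝ :=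
  u (x + t) y - u (x - t) y - A * t * (2 - t)

theorem exists_doubledIncrement_le_paraboloid (hu : Continuous fun p : ℝ × ℝ => u p.1 p.2)
    (hB : ∀ x y, |u x y| ≤ B) (hBA : 2 * B ≤ A) {x₀ y₀ t₀ : ℝ} (ht₀ : t₀ ∈ Set.Icc (0 : ℝ) 1)
    (hpos : 0 < doubledIncrement A u x₀ y₀ t₀) {ε : ℝ} (hε : 0 < ε) :
    ∃ x y, ∃ t ∈ Set.Ioo (0 : ℝ) 1, ∃ ξ υ τ : ℝ, |ξ| ≤ ε ∧ |υ| ≤ ε ∧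
      ∀ x' y', ∀ t' ∈ Set.Icc (0 : ℝ) 1, doubledIncrement A u x' y' t' ≤
        doubledIncrement A u x y t + (ξ * (x' - x) + ε * (x' - x) ^ 2) +
          (υ * (y' - y) + ε * (y' - y) ^ 2) + (τ * (t' - t) + ε * (t' - t) ^ 2) := by
  have hA : 0 ≤ A := by linarith [(abs_nonneg _).trans (hB 0 0)]
  have hdiff (x x' y : ℝ) : u x y - u x' y ≤ A := by
    linarith [abs_le.1 (hB x y), abs_le.1 (hB x' y)]
  have hle (x y t : ℝ) (ht : t ∈ Set.Icc (0 : ℝ) 1) : doubledIncrement A u x y t ≤ A := by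
    have : 0 ≤ A * t * (2 - t) := mul_nonneg (mul_nonneg hA ht.1) (by linarith [ht.2])
    rw [doubledIncrement]
    linarith [hdiff (x + t) (x - t) y]
  have hcont : Continuous fun z : Fin 3 → ℝ => doubledIncrement A u (z 0) (z 1) (z 2) :=
    ((hu.comp (f := fun z : Fin 3 → ℝ => (z 0 + z 2, z 1)) (by fun_prop)).sub
      (hu.comp (f := fun z : Fin 3 → ℝ => (z 0 - z 2, z 1)) (by fun_prop))).sub
      (by fun_prop)
  obtain ⟨q, hq, hpq, ξ, hξ, htouch⟩ :=
    exists_le_paraboloid (S := {z : Fin 3 → ℝ | z 2 ∈ Set.Icc (0 : ℝ) 1})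
      (isClosed_Icc.preimage (continuous_apply 2)) hcont.continuousOn
      ⟨A, Set.forall_mem_image.2 fun z hz => hle _ _ _ hz⟩ (p := ![x₀, y₀, t₀]) ht₀ hε
  replace hpq : 0 < doubledIncrement A u (q 0) (q 1) (q 2) := hpos.trans_le hpq
  have ht0 : q 2 ≠ 0 := fun h => by simp [doubledIncrement, h] at hpq
  have ht1 : q 2 ≠ 1 := fun h => by
    rw [doubledIncrement, h] at hpq
    linarith [hdiff (q 0 + 1) (q 0 - 1) (q 1)]
  refine ⟨q 0, q 1, q 2, ⟨hq.1.lt_of_ne' ht0, hq.2.lt_of_ne ht1⟩, ξ 0, ξ 1, ξ 2, hξ 0, hξ 1,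
    fun x' y' t' ht' => ?_⟩
  simpa [Fin.sum_univ_three, add_assoc] using htouch ![x', y', t'] ht'

theorem exists_almost_critical_doubling (hu : ContDiff ℝ 2 fun p : ℝ × ℝ => u p.1 p.2)
    (hB : ∀ x y, |u x y| ≤ B) (hBA : 2 * B ≤ A) {x₀ y₀ t₀ : ℝ} (ht₀ : t₀ ∈ Set.Icc (0 : ℝ) 1)
    (hpos : 0 < doubledIncrement A u x₀ y₀ t₀) {ε : ℝ} (hε : 0 < ε) :
    ∃ x₁ x₂ y, |pdx u x₁ y - pdx u x₂ y| ≤ ε ∧ |pdy u x₁ y - pdy u x₂ y| ≤ ε ∧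
      pdxx u x₁ y - pdxx u x₂ y + 2 * A ≤ 2 * ε ∧ pdyy u x₁ y - pdyy u x₂ y ≤ 2 * ε := by
  have hu1 := hu.differentiable two_ne_zero
  obtain ⟨x, y, t, ht, ξ, υ, τ, hξ, hυ, htouch⟩ :=
    exists_doubledIncrement_le_paraboloid hu.continuous hB hBA ht₀ hpos hε
  have htI : t ∈ Set.Icc (0 : ℝ) 1 := Set.Ioo_subset_Icc_self ht
  obtain ⟨hx, -⟩ := deriv_eq_and_second_deriv_le_of_le_quadratic (ξ := ξ) (ε := ε)
    (fun s => (((hasDerivAt_pdx hu1 (s + t) y).comp_add_const s t).fun_sub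
      ((hasDerivAt_pdx hu1 (s - t) y).comp_sub_const s t)).sub_const (A * t * (2 - t)))
    (((hasDerivAt_pdxx hu (x + t) y).comp_add_const x t).fun_sub
      ((hasDerivAt_pdxx hu (x - t) y).comp_sub_const x t))
    (Eventually.of_forall fun s => by
      simpa [doubledIncrement] using htouch s y t htI)
  obtain ⟨hy, hyy⟩ := deriv_eq_and_second_deriv_le_of_le_quadratic (ξ := υ) (ε := ε)
    (fun s => ((hasDerivAt_pdy hu1 (x + t) s).fun_sub
      (hasDerivAt_pdy hu1 (x - t) s)).sub_const (A * t * (2 - t)))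
    ((hasDerivAt_pdyy hu (x + t) y).fun_sub (hasDerivAt_pdyy hu (x - t) y))
    (Eventually.of_forall fun s => by
      simpa [doubledIncrement] using htouch x s t htI)
  have hparabola (s : ℝ) : HasDerivAt (fun s => A * s * (2 - s)) (A * (2 - 2 * s)) s :=
    (((hasDerivAt_id' s).const_mul A).fun_mul ((hasDerivAt_id' s).const_sub 2)).congr_deriv
      (by ring)
  obtain ⟨-, htt⟩ := deriv_eq_and_second_deriv_le_of_le_quadratic (ξ := τ) (ε := ε)
    (fun s => (((hasDerivAt_pdx hu1 (x + s) y).comp_const_add x s).fun_sub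
      ((hasDerivAt_pdx hu1 (x - s) y).comp_const_sub x s)).fun_sub (hparabola s))
    ((((hasDerivAt_pdxx hu (x + t) y).comp_const_add x t).fun_sub
      ((hasDerivAt_pdxx hu (x - t) y).comp_const_sub x t).fun_neg).fun_sub
      ((((hasDerivAt_id' t).const_mul 2).const_sub 2).const_mul A))
    (by
      filter_upwards [Icc_mem_nhds ht.1 ht.2] with s hs
      simpa [doubledIncrement] using htouch x y s hs)
  exact ⟨x + t, x - t, y, hx ▸ hξ, hy ▸ hυ, by linarith, hyy⟩

theorem doubledIncrement_nonpos (hu : ContDiff ℝ 2 fun p : ℝ × ℝ => u p.1 p.2)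
    (hB : ∀ x y, |u x y| ≤ B) (hBA : 2 * B ≤ A) (hKA : K < A)
    (hK : ∀ x y, |pdxx u x y + pdyy u x y + a * pdx u x y + b * pdy u x y| ≤ K) (x y : ℝ) {t : ℝ}
    (ht : t ∈ Set.Icc (0 : ℝ) 1) : doubledIncrement A u x y t ≤ 0 := by
  by_contra! hpos
  obtain ⟨ε, hε, hεlt⟩ := exists_pos_mul_lt (sub_pos.2 hKA) (4 + |a| + |b|)
  obtain ⟨x₁, x₂, y', hx, hy, hxx, hyy⟩ := exists_almost_critical_doubling hu hB hBA ht hpos hε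
  have hax : a * (pdx u x₁ y' - pdx u x₂ y') ≤ |a| * ε :=
    (le_abs_self _).trans ((abs_mul a _).trans_le (by gcongr))
  have hby : b * (pdy u x₁ y' - pdy u x₂ y') ≤ |b| * ε :=
    (le_abs_self _).trans ((abs_mul b _).trans_le (by gcongr))
  linarith [abs_le.1 (hK x₁ y'), abs_le.1 (hK x₂ y')]

theorem pdx_le_of_bounded (hu : ContDiff ℝ 2 fun p : ℝ × ℝ => u p.1 p.2)
    (hB : ∀ x y, |u x y| ≤ B) (hBA : 2 * B ≤ A) (hKA : K < A)
    (hK : ∀ x y, |pdxx u x y + pdyy u x y + a * pdx u x y + b * pdy u x y| ≤ K) (x y : ℝ) :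
    pdx u x y ≤ A := by
  have hux := hasDerivAt_pdx (hu.differentiable two_ne_zero) x y
  have hd : HasDerivAt (fun t => u (x + t) y - u (x - t) y) (pdx u x y - -pdx u x y) 0 :=
    HasDerivAt.fun_sub (HasDerivAt.comp_const_add x 0 (by simpa using hux))
      (HasDerivAt.comp_const_sub x 0 (by simpa using hux))
  have hA : Tendsto (fun t : ℝ => A * (2 - t)) (nhdsWithin 0 (Set.Ioi 0)) (nhds (A * (2 - 0))) :=
    ((continuous_const.sub continuous_id).const_mul A).tendsto 0 |>.mono_left nhdsWithin_le_nhds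
  have := le_of_tendsto_of_tendsto hd.tendsto_slope_zero_right hA <| by
    filter_upwards [Ioc_mem_nhdsGT (zero_lt_one' ℝ)] with t ht
    have h := doubledIncrement_nonpos hu hB hBA hKA hK x y (Set.Ioc_subset_Icc_self ht)
    rw [doubledIncrement] at h
    simp only [zero_add, add_zero, sub_zero, sub_self, smul_eq_mul]
    rw [inv_mul_le_iff₀ ht.1]
    linarith
  linarith

theorem abs_pdx_le_of_bounded (hu : ContDiff ℝ 2 fun p : ℝ × ℝ => u p.1 p.2)
    (hB : ∀ x y, |u x y| ≤ B) (hBA : 2 * B ≤ A) (hKA : K < A)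
    (hK : ∀ x y, |pdxx u x y + pdyy u x y + a * pdx u x y + b * pdy u x y| ≤ K) (x y : ℝ) :
    |pdx u x y| ≤ A := by
  have hx : pdx (fun x y => -u x y) = fun x y => -pdx u x y := funext₂ fun x y => deriv.fun_neg
  have hy : pdy (fun x y => -u x y) = fun x y => -pdy u x y := funext₂ fun x y => deriv.fun_neg
  have hneg := pdx_le_of_bounded (u := fun x y => -u x y) (a := a) (b := b) hu.neg
    (fun x y => (abs_neg _).trans_le (hB x y)) hBA hKA (fun x y => by
      rw [← abs_neg]
      simpa [pdxx, pdyy, hx, hy, neg_add_rev, add_comm, add_left_comm] using hK x y) x y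
  rw [hx] at hneg
  exact abs_le.2 ⟨by linarith, pdx_le_of_bounded hu hB hBA hKA hK x y⟩

theorem abs_pdy_le_of_bounded (hu : ContDiff ℝ 2 fun p : ℝ × ℝ => u p.1 p.2)
    (hB : ∀ x y, |u x y| ≤ B) (hBA : 2 * B ≤ A) (hKA : K < A)
    (hK : ∀ x y, |pdxx u x y + pdyy u x y + a * pdx u x y + b * pdy u x y| ≤ K) (x y : ℝ) :
    |pdy u x y| ≤ A :=
  abs_pdx_le_of_bounded (u := fun x y => u y x) (a := b) (b := a)
    (hu.comp (contDiff_snd.prodMk contDiff_fst)) (fun x y => hB y x) hBA hKA (fun x y => by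
      have := hK y x
      rwa [add_comm (pdxx u y x), add_right_comm] at this) y x

end GradientBound

namespace IsSolution

open scoped NNReal

variable {F : ℝ → ℝ} {c l κ δ : ℝ} {K : ℝ≥0} {u v : ℝ → ℝ → ℝ}

theorem contDiff_two (hu : IsSolution F c u) : ContDiff ℝ 2 fun p : ℝ × ℝ => u p.1 p.2 :=
  hu.1.of_le (by norm_num)

theorem waveOperator_eq (hu : IsSolution F c u) (x y : ℝ) :
    waveOperator c u x y = deriv F (u x y) :=
  hu.2.1 x y

theorem mem_Icc (hu : IsSolution F c u) (x y : ℝ) : u x y ∈ Set.Icc (-1 : ℝ) 1 :=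
  abs_le.1 (hu.2.2.1 x y)

theorem strictMono (hu : IsSolution F c u) (x : ℝ) : StrictMono (u x) :=
  strictMono_of_deriv_pos (hu.2.2.2 x)

theorem reflect_shift (hu : IsSolution F c u) (l s : ℝ) :
    IsSolution F c fun x y => u (l - x) (y + s) := by
  refine ⟨hu.1.comp (f := fun p : ℝ × ℝ => (l - p.1, p.2 + s)) (by fun_prop), fun x y => ?_,
    fun x y => hu.2.2.1 _ _, fun x y => ?_⟩
  · exact (waveOperator_reflect_shift l s x y).trans (hu.waveOperator_eq _ _)
  · exact (hu.2.2.2 (l - x) (y + s)).trans_eq (deriv_comp_add_const (u (l - x)) s y).symm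

theorem reflect (hu : IsSolution F c u) : IsSolution F c fun x y => u (-x) y := by
  simpa using hu.reflect_shift 0 0

theorem neg_comp_neg (hu : IsSolution F c u) :
    IsSolution (fun s => F (-s)) (-c) fun x y => -u (-x) (-y) := by
  refine ⟨(hu.1.comp (f := fun p : ℝ × ℝ => (-p.1, -p.2)) (by fun_prop)).neg, fun x y => ?_,
    fun x y => (abs_neg _).trans_le (hu.2.2.1 _ _), fun x y => ?_⟩
  · refine (waveOperator_neg_comp_neg x y).trans ?_
    rw [hu.waveOperator_eq, deriv_comp_neg, neg_neg]
  · refine (hu.2.2.2 (-x) (-y)).trans_eq ?_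
    rw [pdy, pdy, deriv.fun_neg, deriv_comp_neg (u (-x)), neg_neg]

theorem le_of_le_on_line (hu : IsSolution F c u) (hv : IsSolution F c v)
    (hlip : LipschitzOnWith K (deriv F) (Set.Icc (-1) 1)) (hκ : 0 < κ)
    (hslope : MonotoneOn (fun s => deriv F s - κ * s) (Set.Icc (-1) (-1 + δ)))
    (hline : ∀ y, u l y ≤ v l y)
    (hfar : ∀ x < l - stripWidth K, ∀ y, v x y < u x y → u x y ≤ -1 + δ) :
    ∀ x ≤ l, ∀ y, u x y ≤ v x y := by
  have hL (x y : ℝ) : waveOperator c (fun x y => u x y - v x y) x y =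
      deriv F (u x y) - deriv F (v x y) := by
    rw [waveOperator_sub hu.contDiff_two hv.contDiff_two, hu.waveOperator_eq, hv.waveOperator_eq]
  refine fun x hx y => sub_nonpos.1 <| nonpos_of_narrow_strip (c := c) (B := 2) (κ := κ)
    (w := fun x y => u x y - v x y) K.2 (hu.contDiff_two.sub hv.contDiff_two)
    (fun x _ y => by linarith [(hu.mem_Icc x y).2, (hv.mem_Icc x y).1])
    (fun y => sub_nonpos.2 (hline y)) hκ (fun x _ y hpos _ => ?_) (fun x _ y hpos hx => ?_) x hx y
  · have := hlip.dist_le_mul _ (hu.mem_Icc x y) _ (hv.mem_Icc x y)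
    rw [Real.dist_eq, Real.dist_eq, abs_of_pos hpos] at this
    rw [hL, neg_mul]
    exact (abs_le.1 this).1
  · have hvu := sub_pos.1 hpos
    have hle := hfar x hx y hvu
    have := hslope ⟨(hv.mem_Icc x y).1, hvu.le.trans hle⟩ ⟨(hu.mem_Icc x y).1, hle⟩ hvu.le
    dsimp only at this
    rw [hL]
    linarith

theorem lt_of_lt_on_line (hu : IsSolution F c u) (hv : IsSolution F c v)
    (hlip : LipschitzOnWith K (deriv F) (Set.Icc (-1) 1)) (hle : ∀ x ≤ l, ∀ y, u x y ≤ v x y)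
    (hline : ∀ y, u l y < v l y) {x : ℝ} (hx : x ≤ l) (y : ℝ) : u x y < v x y := by
  refine sub_pos.1 <| pos_of_pos_on_line (c := c) (z := fun x y => v x y - u x y) K.2
    (hv.contDiff_two.sub hu.contDiff_two) (fun x hx y => sub_nonneg.2 (hle x hx y))
    (fun y => sub_pos.2 (hline y)) (fun x hx y => ?_) hx y
  have := hlip.dist_le_mul _ (hv.mem_Icc x y) _ (hu.mem_Icc x y)
  rw [Real.dist_eq, Real.dist_eq, abs_of_nonneg (sub_nonneg.2 (hle x hx.le y))] at this
  rw [waveOperator_sub hv.contDiff_two hu.contDiff_two, hu.waveOperator_eq, hv.waveOperator_eq]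
  exact (le_abs_self _).trans this

end IsSolution

/-- A compact subset of the half-plane `x ≤ l` to which the comparison of `u` with its reflection in
the line `x = l` reduces: left of the line `x = r` and off `Q`, the function `u` lies below its
reflection or below `b`, and on `Q` it lies below some upward shift of its reflection. -/
structure IsSlidingCore (u : ℝ → ℝ → ℝ) (l r b : ℝ) (Q : Set (ℝ × ℝ)) : Prop where
  isCompact : IsCompact Q
  fst_le : ∀ p ∈ Q, p.1 ≤ l
  le_or_le_reflection : ∀ x < r, ∀ y, (x, y) ∉ Q → u x y ≤ b ∨ u x y ≤ u (2 * l - x) y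
  exists_shift : ∃ s ≥ 0, ∀ p ∈ Q, u p.1 p.2 ≤ u (2 * l - p.1) (p.2 + s)

namespace IsSolution

open scoped NNReal

variable {F : ℝ → ℝ} {c l κ δ : ℝ} {K : ℝ≥0} {u : ℝ → ℝ → ℝ} {Q : Set (ℝ × ℝ)}

theorem le_reflect_shift_of_core (hu : IsSolution F c u)
    (hlip : LipschitzOnWith K (deriv F) (Set.Icc (-1) 1)) (hκ : 0 < κ)
    (hslope : MonotoneOn (fun s => deriv F s - κ * s) (Set.Icc (-1) (-1 + δ)))
    (hQ : IsSlidingCore u l (l - stripWidth K) (-1 + δ) Q) {s : ℝ} (hs : 0 ≤ s)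
    (hsQ : ∀ p ∈ Q, u p.1 p.2 ≤ u (2 * l - p.1) (p.2 + s)) :
    ∀ x ≤ l, ∀ y, u x y ≤ u (2 * l - x) (y + s) := by
  have hshift (x y : ℝ) : u x y ≤ u x (y + s) :=
    (hu.strictMono x).monotone (le_add_of_nonneg_right hs)
  refine hu.le_of_le_on_line (hu.reflect_shift (2 * l) s) hlip hκ hslope (fun y => ?_)
    fun x hx y hlt => ?_
  · simpa only [show 2 * l - l = l by ring] using hshift l y
  · have hxy : (x, y) ∉ Q := fun h => hlt.not_ge (hsQ _ h)
    exact (hQ.le_or_le_reflection x hx y hxy).resolve_right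
      fun h => hlt.not_ge (h.trans (hshift _ _))

theorem exists_lt_forall_le_reflect_shift (hu : IsSolution F c u)
    (hlip : LipschitzOnWith K (deriv F) (Set.Icc (-1) 1)) (hQ : IsCompact Q)
    (hQl : ∀ p ∈ Q, p.1 ≤ l) {s : ℝ} (hs : 0 < s)
    (hle : ∀ x ≤ l, ∀ y, u x y ≤ u (2 * l - x) (y + s)) :
    ∃ t, 0 ≤ t ∧ t < s ∧ ∀ p ∈ Q, u p.1 p.2 ≤ u (2 * l - p.1) (p.2 + t) := by
  have hlt {x : ℝ} (hx : x ≤ l) (y : ℝ) : u x y < u (2 * l - x) (y + s) := by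
    refine hu.lt_of_lt_on_line (hu.reflect_shift (2 * l) s) hlip hle (fun y => ?_) hx y
    simpa only [show 2 * l - l = l by ring] using hu.strictMono l (lt_add_of_pos_right y hs)
  have hnear : ∀ᶠ t in nhds s, ∀ p ∈ Q, u p.1 p.2 < u (2 * l - p.1) (p.2 + t) :=
    hQ.eventually_forall_of_forall_eventually fun p hp =>
      (hu.1.continuous.comp continuous_snd).continuousAt.eventually_lt
        (hu.1.continuous.comp (f := fun z : ℝ × ℝ × ℝ => (2 * l - z.2.1, z.2.2 + z.1))
          (by fun_prop)).continuousAt (hlt (hQl p hp) p.2)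
  obtain ⟨t, ht, hts⟩ := ((hnear.filter_mono nhdsWithin_le_nhds).and
    (Ioo_mem_nhdsLT hs)).exists
  exact ⟨t, hts.1.le, hts.2, fun p hp => (ht p hp).le⟩

theorem le_reflection_of_core (hu : IsSolution F c u)
    (hlip : LipschitzOnWith K (deriv F) (Set.Icc (-1) 1)) (hκ : 0 < κ)
    (hslope : MonotoneOn (fun s => deriv F s - κ * s) (Set.Icc (-1) (-1 + δ)))
    (hQ : IsSlidingCore u l (l - stripWidth K) (-1 + δ) Q) {x : ℝ} (hx : x ≤ l) (y : ℝ) :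
    u x y ≤ u (2 * l - x) y := by
  set S : Set ℝ := Set.Ici 0 ∩ ⋂ p ∈ Q, {s | u p.1 p.2 ≤ u (2 * l - p.1) (p.2 + s)}
  have hS : IsClosed S := isClosed_Ici.inter <| isClosed_biInter fun p _ =>
    isClosed_le continuous_const
      (hu.1.continuous.comp (f := fun s : ℝ => (2 * l - p.1, p.2 + s)) (by fun_prop))
  have hbdd : BddBelow S := ⟨0, fun s hs => hs.1⟩
  obtain ⟨s₀, hs₀, hs₀Q⟩ := hQ.exists_shift
  obtain ⟨hs, hsQ⟩ := hS.csInf_mem ⟨s₀, hs₀, Set.mem_iInter₂.2 hs₀Q⟩ hbdd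
  have hle := hu.le_reflect_shift_of_core hlip hκ hslope hQ hs (Set.mem_iInter₂.1 hsQ)
  rcases (Set.mem_Ici.1 hs).eq_or_lt with h0 | hpos
  · simpa [← h0] using hle x hx y
  · obtain ⟨t, ht0, hts, ht⟩ :=
      hu.exists_lt_forall_le_reflect_shift hlip hQ.isCompact hQ.fst_le hpos hle
    exact absurd (csInf_le hbdd ⟨ht0, Set.mem_iInter₂.2 ht⟩) hts.not_ge

end IsSolution

theorem contDiff_one_deriv {F : ℝ → ℝ} (hF : ContDiff ℝ 2 F) : ContDiff ℝ 1 (deriv F) :=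
  ContDiff.deriv' (n := 1) (one_add_one_eq_two (R := WithTop ℕ∞) ▸ hF)

open scoped NNReal in
theorem exists_lipschitzOnWith_deriv {F : ℝ → ℝ} (hF : ContDiff ℝ 2 F) {s : Set ℝ}
    (hs : IsCompact s) : ∃ K : ℝ≥0, LipschitzOnWith K (deriv F) s :=
  (contDiff_one_deriv hF).locallyLipschitz.locallyLipschitzOn.exists_lipschitzOnWith_of_compact hs

theorem exists_monotoneOn_sub_mul {F : ℝ → ℝ} (hF : ContDiff ℝ 2 F) {a : ℝ}
    (ha : 0 < deriv (deriv F) a) :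
    ∃ κ > 0, ∃ δ > 0, MonotoneOn (fun s => deriv F s - κ * s) (Set.Icc a (a + δ)) := by
  set κ := deriv (deriv F) a / 2
  have hd (s : ℝ) : HasDerivAt (fun s => deriv F s - κ * s) (deriv (deriv F) s - κ) s :=
    ((hF.differentiable_deriv_two s).hasDerivAt.sub
      ((hasDerivAt_id' s).const_mul κ)).congr_deriv (by rw [mul_one])
  have hnear : ∀ᶠ s in nhds a, κ < deriv (deriv F) s :=
    (contDiff_one_deriv hF).continuous_deriv_one.continuousAt.eventually_const_lt
      (half_lt_self ha)
  obtain ⟨δ, hδ, hball⟩ := Metric.eventually_nhds_iff.1 hnear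
  refine ⟨κ, half_pos ha, δ / 2, half_pos hδ, monotoneOn_of_deriv_nonneg (convex_Icc _ _)
    (fun s _ => (hd s).continuousAt.continuousWithinAt)
    (fun s _ => (hd s).differentiableAt.differentiableWithinAt) fun s hs => ?_⟩
  rw [(hd s).deriv, sub_nonneg]
  rw [interior_Icc] at hs
  refine (hball ?_).le
  rw [Real.dist_eq, abs_of_pos (sub_pos.2 hs.1)]
  linarith [hs.2]

/-- `v` is a front from `-1` to `1`: a continuous, strictly increasing profile with these limits. -/
structure IsFront (v : ℝ → ℝ) : Prop where
  continuous : Continuous v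
  strictMono : StrictMono v
  tendsto_atBot : Tendsto v atBot (nhds (-1))
  tendsto_atTop : Tendsto v atTop (nhds 1)

namespace IsFront

variable {v : ℝ → ℝ}

theorem translate (hv : IsFront v) (K : ℝ) : IsFront fun x => v (x - K) where
  continuous := hv.continuous.comp (continuous_id.sub continuous_const)
  strictMono := hv.strictMono.comp fun _ _ h => sub_lt_sub_right h K
  tendsto_atBot := hv.tendsto_atBot.comp (tendsto_atBot_add_const_right _ (-K) tendsto_id)
  tendsto_atTop := hv.tendsto_atTop.comp (tendsto_atTop_add_const_right _ (-K) tendsto_id)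

theorem neg_comp_neg (hv : IsFront v) : IsFront fun x => -v (-x) where
  continuous := (hv.continuous.comp continuous_neg).neg
  strictMono _ _ h := neg_lt_neg (hv.strictMono (neg_lt_neg h))
  tendsto_atBot := (hv.tendsto_atTop.comp tendsto_neg_atBot_atTop).neg
  tendsto_atTop := by simpa using (hv.tendsto_atBot.comp tendsto_neg_atTop_atBot).neg

end IsFront

namespace IsSolution

open scoped NNReal

variable {F : ℝ → ℝ} {c : ℝ} {u : ℝ → ℝ → ℝ} {v w : ℝ → ℝ}

theorem continuous_fst (hu : IsSolution F c u) (y : ℝ) : Continuous fun x => u x y :=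
  hu.1.continuous.comp (Continuous.prodMk_left y)

theorem le_upper_limit (hu : IsSolution F c u)
    (hv : ∀ x, Tendsto (fun y => u x y) atTop (nhds (v x))) (x y : ℝ) : u x y ≤ v x :=
  (hu.strictMono x).monotone.ge_of_tendsto (hv x) y

theorem lower_limit_le (hu : IsSolution F c u)
    (hw : ∀ x, Tendsto (fun y => u x y) atBot (nhds (w x))) (x y : ℝ) : w x ≤ u x y :=
  (hu.strictMono x).monotone.le_of_tendsto (hw x) y

theorem exists_upper_limit_lt_reflection (hu : IsSolution F c u)
    (hv : ∀ x, Tendsto (fun y => u x y) atTop (nhds (v x))) (hvc : Continuous v)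
    (hvm : StrictMono v) {l : ℝ} {I : Set ℝ} (hI : IsCompact I) (hIl : ∀ x ∈ I, x < l) :
    ∃ Y, ∀ x ∈ I, v x < u (2 * l - x) Y := by
  refine hI.elim_directed_cover (fun Y => {x | v x < u (2 * l - x) Y})
    (fun Y => isOpen_lt hvc ((hu.continuous_fst Y).comp (continuous_const.sub continuous_id)))
    (fun x hx => ?_)
    (Monotone.directed_le fun _ _ h x hx => lt_of_lt_of_le hx ((hu.strictMono _).monotone h))
  have hlt : v x < v (2 * l - x) := hvm (by linarith [hIl x hx])
  exact Set.mem_iUnion.2 ((hv _).eventually_const_lt hlt).exists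

theorem exists_lt_or_lt_lower_limit (hu : IsSolution F c u)
    (hw : ∀ x, Tendsto (fun y => u x y) atBot (nhds (w x))) (hwc : Continuous w) {l b : ℝ}
    {I : Set ℝ} (hI : IsCompact I) (hIw : ∀ x ∈ I, w x < b ∨ w x < w (2 * l - x)) :
    ∃ Y, ∀ x ∈ I, u x Y < b ∨ u x Y < w (2 * l - x) := by
  refine hI.elim_directed_cover (fun Y => {x | u x Y < b} ∪ {x | u x Y < w (2 * l - x)})
    (fun Y => (isOpen_lt (hu.continuous_fst Y) continuous_const).union (isOpen_lt
      (hu.continuous_fst Y) (hwc.comp (continuous_const.sub continuous_id))))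
    (fun x hx => Set.mem_iUnion.2 ?_)
    (Antitone.directed_le fun _ _ h x =>
      Or.imp ((hu.strictMono x).monotone h).trans_lt ((hu.strictMono x).monotone h).trans_lt)
  rcases hIw x hx with h | h
  · exact ((hw x).eventually_lt_const h).exists.imp fun _ => Or.inl
  · exact ((hw x).eventually_lt_const h).exists.imp fun _ => Or.inr

theorem exists_isSlidingCore (hu : IsSolution F c u)
    (hv : ∀ x, Tendsto (fun y => u x y) atTop (nhds (v x)))
    (hw : ∀ x, Tendsto (fun y => u x y) atBot (nhds (w x)))
    (hvf : IsFront v) (hwf : IsFront w ∨ ∀ x, w x = -1) {l r b : ℝ} (hr : r < l) (hb : -1 < b) :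
    ∃ Q, IsSlidingCore u l r b Q := by
  have hwc : Continuous w :=
    hwf.elim IsFront.continuous fun h => (funext h : w = _) ▸ continuous_const
  obtain ⟨m, hm⟩ := eventually_atBot.1 (hvf.tendsto_atBot.eventually_lt_const hb)
  have hIl (x : ℝ) (hx : x ∈ Set.Icc m r) : x < l := hx.2.trans_lt hr
  obtain ⟨Y₁, hY₁⟩ :=
    hu.exists_upper_limit_lt_reflection hv hvf.continuous hvf.strictMono isCompact_Icc hIl
  obtain ⟨Y₀, hY₀⟩ := hu.exists_lt_or_lt_lower_limit (l := l) (b := b) hw hwc isCompact_Icc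
    fun x hx => hwf.symm.imp (fun h => (h x).trans_lt hb)
      fun h => h.strictMono (by linarith [hIl x hx])
  have hmono (x : ℝ) := (hu.strictMono x).monotone
  refine ⟨Set.Icc m r ×ˢ Set.Icc Y₀ Y₁, isCompact_Icc.prod isCompact_Icc,
    fun p hp => (hIl _ hp.1).le, fun x hx y hxy => ?_, max 0 (Y₁ - Y₀), le_max_left _ _,
    fun p hp => ?_⟩
  · rcases lt_or_ge x m with hxm | hxm
    · exact Or.inl ((hu.le_upper_limit hv x y).trans (hm x hxm.le).le)
    have hxI : x ∈ Set.Icc m r := ⟨hxm, hx.le⟩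
    rcases lt_or_ge y Y₀ with hy₀ | hy₀
    · refine (hY₀ x hxI).imp (fun h => (hmono x hy₀.le).trans h.le) fun h => ?_
      exact (hmono x hy₀.le).trans (h.le.trans (hu.lower_limit_le hw _ y))
    · have hy₁ : Y₁ ≤ y := le_of_not_ge fun h => hxy ⟨hxI, hy₀, h⟩
      exact Or.inr ((hu.le_upper_limit hv x y).trans ((hY₁ x hxI).le.trans (hmono _ hy₁)))
  · refine (hu.le_upper_limit hv p.1 p.2).trans ((hY₁ _ hp.1).le.trans (hmono _ ?_))
    linarith [hp.2.1, le_max_right 0 (Y₁ - Y₀)]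

theorem monotone_fst_of_upper_front (hu : IsSolution F c u) (hF : ContDiff ℝ 2 F)
    (hF'' : 0 < deriv (deriv F) (-1)) (hv : ∀ x, Tendsto (fun y => u x y) atTop (nhds (v x)))
    (hw : ∀ x, Tendsto (fun y => u x y) atBot (nhds (w x)))
    (hvf : IsFront v) (hwf : IsFront w ∨ ∀ x, w x = -1) (y : ℝ) : Monotone fun x => u x y := by
  intro a b hab
  obtain ⟨K, hK⟩ := exists_lipschitzOnWith_deriv hF isCompact_Icc
  obtain ⟨κ, hκ, δ, hδ, hslope⟩ := exists_monotoneOn_sub_mul hF hF''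
  obtain ⟨Q, hQ⟩ := hu.exists_isSlidingCore (l := (a + b) / 2) hv hw hvf hwf
    (sub_lt_self _ (stripWidth_pos K.2)) (lt_add_of_pos_right (-1) hδ)
  have := hu.le_reflection_of_core hK hκ hslope hQ (x := a) (by linarith) y
  rwa [show 2 * ((a + b) / 2) - a = b by ring] at this

theorem monotone_fst_of_lower_front (hu : IsSolution F c u) (hF : ContDiff ℝ 2 F)
    (hF'' : 0 < deriv (deriv F) 1) (hv : ∀ x, Tendsto (fun y => u x y) atTop (nhds (v x)))
    (hw : ∀ x, Tendsto (fun y => u x y) atBot (nhds (w x)))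
    (hvf : IsFront v ∨ ∀ x, v x = 1) (hwf : IsFront w) (y : ℝ) : Monotone fun x => u x y := by
  have hF''_neg : 0 < deriv (deriv fun s => F (-s)) (-1) := by
    rw [show (deriv fun s => F (-s)) = fun s => -deriv F (-s) from
      funext fun s => deriv_comp_neg F s, deriv.fun_neg, deriv_comp_neg (deriv F), neg_neg, neg_neg]
    exact hF''
  have hmono := hu.neg_comp_neg.monotone_fst_of_upper_front (hF.comp contDiff_neg) hF''_neg
    (fun x => ((hw (-x)).comp tendsto_neg_atTop_atBot).neg)
    (fun x => ((hv (-x)).comp tendsto_neg_atBot_atTop).neg) hwf.neg_comp_neg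
    (hvf.imp IsFront.neg_comp_neg fun h x => by rw [h]) (-y)
  intro a b hab
  simpa using hmono (neg_le_neg hab)

end IsSolution

/-- A pair of limiting profiles, `v` above and `w` below, of which at least one is a front, the
other being a front too or the constant state `1` (above) or `-1` (below). -/
def IsFrontPair (v w : ℝ → ℝ) : Prop :=
  IsFront v ∧ (IsFront w ∨ ∀ x, w x = -1) ∨ (∀ x, v x = 1) ∧ IsFront w

theorem IsSolution.pdx_nonneg_of_isFrontPair {F : ℝ → ℝ} {c : ℝ} {u : ℝ → ℝ → ℝ} {v w : ℝ → ℝ}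
    (hu : IsSolution F c u) (hF : ContDiff ℝ 2 F) (hF''_neg : 0 < deriv (deriv F) (-1))
    (hF''_pos : 0 < deriv (deriv F) 1) (hv : ∀ x, Tendsto (fun y => u x y) atTop (nhds (v x)))
    (hw : ∀ x, Tendsto (fun y => u x y) atBot (nhds (w x))) (hvw : IsFrontPair v w) (x y : ℝ) :
    0 ≤ pdx u x y := by
  rcases hvw with ⟨hvf, hwf⟩ | ⟨hv_one, hwf⟩
  · exact (hu.monotone_fst_of_upper_front hF hF''_neg hv hw hvf hwf y).deriv_nonneg
  · exact (hu.monotone_fst_of_lower_front hF hF''_pos hv hw (.inr hv_one) hwf y).deriv_nonneg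

/-- `u` takes values in `[-1, 1]` and has partial derivatives in `[0, A]`. This is
all that the flux estimates need to know about a solution. -/
structure IsMonotoneProfile (u : ℝ → ℝ → ℝ) (A : ℝ) : Prop where
  contDiff : ContDiff ℝ 1 fun p : ℝ × ℝ => u p.1 p.2
  mem_Icc : ∀ x y, u x y ∈ Set.Icc (-1) 1
  pdx_nonneg : ∀ x y, 0 ≤ pdx u x y
  pdx_le : ∀ x y, pdx u x y ≤ A
  pdy_nonneg : ∀ x y, 0 ≤ pdy u x y
  pdy_le : ∀ x y, pdy u x y ≤ A

/-- The `xx`-component `u_x² - (|∇u|² / 2 + F(u))` of the stress tensor of the Allen-Cahn energy.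
The `yy`-component is obtained by exchanging the variables of `u`. -/
noncomputable def stress (F : ℝ → ℝ) (u : ℝ → ℝ → ℝ) (x y : ℝ) : ℝ :=
  pdx u x y ^ 2 / 2 - pdy u x y ^ 2 / 2 - F (u x y)

theorem exists_le_mul_one_sub {F : ℝ → ℝ} (hF : ContDiff ℝ 1 F) (hF_one : F 1 = 0) :
    ∃ C, 0 ≤ C ∧ ∀ s ∈ Set.Icc (-1 : ℝ) 1, F s ≤ C * (1 - s) := by
  obtain ⟨C, hC⟩ := hF.locallyLipschitz.locallyLipschitzOn.exists_lipschitzOnWith_of_compact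
    (isCompact_Icc (a := (-1 : ℝ)) (b := 1))
  refine ⟨C, C.2, fun s hs => ?_⟩
  have hdist := hC.dist_le_mul s hs 1 (Set.right_mem_Icc.2 (by norm_num))
  rw [Real.dist_eq, Real.dist_eq, hF_one, sub_zero, abs_sub_comm s,
    abs_of_nonneg (sub_nonneg.2 hs.2)] at hdist
  exact (le_abs_self _).trans hdist

section Slices

variable {u : ℝ → ℝ → ℝ}

theorem continuous_pdx (hu : ContDiff ℝ 1 fun p : ℝ × ℝ => u p.1 p.2) :
    Continuous fun p : ℝ × ℝ => pdx u p.1 p.2 :=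
  (contDiff_pdx (m := 0) hu (zero_add _).le).continuous

theorem continuous_pdy (hu : ContDiff ℝ 1 fun p : ℝ × ℝ => u p.1 p.2) :
    Continuous fun p : ℝ × ℝ => pdy u p.1 p.2 :=
  (contDiff_pdy (m := 0) hu (zero_add _).le).continuous

theorem integral_pdx (hu : ContDiff ℝ 1 fun p : ℝ × ℝ => u p.1 p.2) (x₁ x₂ y : ℝ) :
    ∫ x in x₁..x₂, pdx u x y = u x₂ y - u x₁ y :=
  intervalIntegral.integral_eq_sub_of_hasDerivAt
    (fun x _ => hasDerivAt_pdx (hu.differentiable one_ne_zero) x y)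
    (((continuous_pdx hu).comp (Continuous.prodMk_left y)).intervalIntegrable _ _)

theorem integral_integral_pdx (hu : ContDiff ℝ 1 fun p : ℝ × ℝ => u p.1 p.2) (x₁ x₂ y₁ y₂ : ℝ) :
    ∫ x in x₁..x₂, ∫ y in y₁..y₂, pdx u x y = ∫ y in y₁..y₂, (u x₂ y - u x₁ y) := by
  have hcont (x : ℝ) : Continuous fun y => u x y := hu.continuous.comp (Continuous.prodMk_right x)
  have hzero (x y : ℝ) : pdy (fun _ _ => 0) x y = 0 := deriv_const y 0
  have hdiv := integral_pdx_add_pdy (Q := fun _ _ => 0) hu contDiff_const x₁ x₂ y₁ y₂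
  simp only [hzero, add_zero, intervalIntegral.integral_zero, sub_zero, zero_add] at hdiv
  rw [hdiv, intervalIntegral.integral_sub ((hcont _).intervalIntegrable _ _)
    ((hcont _).intervalIntegrable _ _)]

theorem exists_integral_pdx_lt (hu : ContDiff ℝ 1 fun p : ℝ × ℝ => u p.1 p.2) {B : ℝ}
    (hB : ∀ x y, |u x y| ≤ B) {ε : ℝ} (hε : 0 < ε) (a y₁ y₂ : ℝ) :
    ∃ x ≤ a, ∫ y in y₁..y₂, pdx u x y < ε := by
  by_contra! hge
  have hB₀ : 0 ≤ B := (abs_nonneg _).trans (hB 0 0)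
  set N := (2 * B * |y₂ - y₁| + 1) / ε
  have hN : 0 ≤ N := by positivity
  have hlower : N * ε ≤ ∫ x in (a - N)..a, ∫ y in y₁..y₂, pdx u x y :=
    calc N * ε = ∫ _ in (a - N)..a, ε := by
          rw [intervalIntegral.integral_const, smul_eq_mul, sub_sub_cancel]
      _ ≤ _ := intervalIntegral.integral_mono_on (sub_le_self a hN) (by simp)
          ((intervalIntegral.continuous_parametric_intervalIntegral_of_continuous'
            (continuous_pdx hu) _ _).intervalIntegrable _ _) fun x hx => hge x hx.2
  have hupper : ‖∫ y in y₁..y₂, (u a y - u (a - N) y)‖ ≤ 2 * B * |y₂ - y₁| :=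
    intervalIntegral.norm_integral_le_of_norm_le_const fun y _ =>
      (norm_sub_le _ _).trans ((add_le_add (hB a y) (hB _ y)).trans_eq (two_mul B).symm)
  rw [integral_integral_pdx hu, div_mul_cancel₀ _ hε.ne'] at hlower
  linarith [le_norm_self (∫ y in y₁..y₂, (u a y - u (a - N) y))]

end Slices

namespace IsMonotoneProfile

variable {F : ℝ → ℝ} {u : ℝ → ℝ → ℝ} {A C : ℝ}

theorem swap (hu : IsMonotoneProfile u A) : IsMonotoneProfile (fun x y => u y x) A where
  contDiff := hu.contDiff.comp (contDiff_snd.prodMk contDiff_fst)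
  mem_Icc x y := hu.mem_Icc y x
  pdx_nonneg x y := hu.pdy_nonneg y x
  pdx_le x y := hu.pdy_le y x
  pdy_nonneg x y := hu.pdx_nonneg y x
  pdy_le x y := hu.pdx_le y x

theorem bound_nonneg (hu : IsMonotoneProfile u A) : 0 ≤ A :=
  (hu.pdx_nonneg 0 0).trans (hu.pdx_le 0 0)

theorem monotone_fst (hu : IsMonotoneProfile u A) (y : ℝ) : Monotone fun x => u x y :=
  monotone_of_deriv_nonneg
    (fun x => (hasDerivAt_pdx (hu.contDiff.differentiable one_ne_zero) x y).differentiableAt)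
    fun x => hu.pdx_nonneg x y

theorem sub_le_two (hu : IsMonotoneProfile u A) (x y s t : ℝ) : u x y - u s t ≤ 2 := by
  linarith [(hu.mem_Icc x y).2, (hu.mem_Icc s t).1]

theorem continuous_pdx_fst (hu : IsMonotoneProfile u A) (y : ℝ) :
    Continuous fun x => pdx u x y :=
  (continuous_pdx hu.contDiff).comp (Continuous.prodMk_left y)

theorem continuous_pdy_fst (hu : IsMonotoneProfile u A) (y : ℝ) :
    Continuous fun x => pdy u x y :=
  (continuous_pdy hu.contDiff).comp (Continuous.prodMk_left y)

theorem intervalIntegrable_pdx_mul_pdy (hu : IsMonotoneProfile u A) (x₁ x₂ y : ℝ) :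
    IntervalIntegrable (fun x => pdx u x y * pdy u x y) volume x₁ x₂ :=
  ((hu.continuous_pdx_fst y).mul (hu.continuous_pdy_fst y)).intervalIntegrable _ _

theorem integral_pdx_mul_pdy_le (hu : IsMonotoneProfile u A) {x₁ x₂ : ℝ} (hx : x₁ ≤ x₂)
    (y : ℝ) : ∫ x in x₁..x₂, pdx u x y * pdy u x y ≤ 2 * A :=
  calc ∫ x in x₁..x₂, pdx u x y * pdy u x y ≤ ∫ x in x₁..x₂, pdx u x y * A :=
        intervalIntegral.integral_mono_on hx (hu.intervalIntegrable_pdx_mul_pdy _ _ _)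
          (((hu.continuous_pdx_fst y).mul continuous_const).intervalIntegrable _ _)
          fun x _ => mul_le_mul_of_nonneg_left (hu.pdy_le x y) (hu.pdx_nonneg x y)
    _ = (u x₂ y - u x₁ y) * A := by
        rw [intervalIntegral.integral_mul_const, integral_pdx hu.contDiff]
    _ ≤ 2 * A := mul_le_mul_of_nonneg_right (hu.sub_le_two _ _ _ _) hu.bound_nonneg

theorem stress_le (hu : IsMonotoneProfile u A) (hF₀ : ∀ s ∈ Set.Icc (-1 : ℝ) 1, 0 ≤ F s)
    (x y : ℝ) : stress F u x y ≤ A / 2 * pdx u x y := by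
  have hsq := mul_le_mul_of_nonneg_right (hu.pdx_le x y) (hu.pdx_nonneg x y)
  rw [stress]
  linarith [hF₀ _ (hu.mem_Icc x y), sq_nonneg (pdy u x y)]

theorem neg_stress_le (hu : IsMonotoneProfile u A)
    (hFC : ∀ s ∈ Set.Icc (-1 : ℝ) 1, F s ≤ C * (1 - s)) (x y : ℝ) :
    -stress F u x y ≤ A / 2 * pdy u x y + C * (1 - u x y) := by
  have hsq := mul_le_mul_of_nonneg_right (hu.pdy_le x y) (hu.pdy_nonneg x y)
  rw [stress]
  linarith [hFC _ (hu.mem_Icc x y), sq_nonneg (pdx u x y)]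

section WeightedFlux

variable {ρ : ℝ → ℝ} {y₁ y₂ : ℝ}

theorem intervalIntegrable_mul_stress (hu : IsMonotoneProfile u A) (hF : Continuous F)
    (hρ : Continuous ρ) (x y₁ y₂ : ℝ) :
    IntervalIntegrable (fun y => ρ y * stress F u x y) volume y₁ y₂ :=
  (hρ.mul (((((hu.swap.continuous_pdy_fst x).pow 2).div_const 2).sub
    (((hu.swap.continuous_pdx_fst x).pow 2).div_const 2)).sub
    (hF.comp (hu.contDiff.continuous.comp (Continuous.prodMk_right x))))).intervalIntegrable _ _

theorem integral_mul_stress_le (hu : IsMonotoneProfile u A) (hF : Continuous F)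
    (hF₀ : ∀ s ∈ Set.Icc (-1 : ℝ) 1, 0 ≤ F s) (hρ : Continuous ρ) (hy : y₁ ≤ y₂)
    (hρI : ∀ y ∈ Set.Icc y₁ y₂, ρ y ∈ Set.Icc 0 1) (x : ℝ) :
    ∫ y in y₁..y₂, ρ y * stress F u x y ≤ A / 2 * ∫ y in y₁..y₂, pdx u x y := by
  rw [← intervalIntegral.integral_const_mul]
  refine intervalIntegral.integral_mono_on hy (hu.intervalIntegrable_mul_stress hF hρ _ _ _)
    ((continuous_const.mul (hu.swap.continuous_pdy_fst x)).intervalIntegrable _ _) fun y hyI => ?_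
  have hnonneg : 0 ≤ A / 2 * pdx u x y :=
    mul_nonneg (div_nonneg hu.bound_nonneg zero_le_two) (hu.pdx_nonneg x y)
  exact (mul_le_mul_of_nonneg_left (hu.stress_le hF₀ x y) (hρI y hyI).1).trans
    (mul_le_of_le_one_left hnonneg (hρI y hyI).2)

theorem neg_integral_mul_stress_le (hu : IsMonotoneProfile u A) (hF : Continuous F)
    (hC : 0 ≤ C) (hFC : ∀ s ∈ Set.Icc (-1 : ℝ) 1, F s ≤ C * (1 - s)) (hρ : Continuous ρ)
    (hy : y₁ ≤ y₂) (hρI : ∀ y ∈ Set.Icc y₁ y₂, ρ y ∈ Set.Icc 0 1) (x : ℝ) :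
    -∫ y in y₁..y₂, ρ y * stress F u x y ≤
      A / 2 * (u x y₂ - u x y₁) + C * (1 - u x y₁) * (y₂ - y₁) := by
  have hA := hu.bound_nonneg
  have hpdy : Continuous fun y => pdy u x y := hu.swap.continuous_pdx_fst x
  calc -∫ y in y₁..y₂, ρ y * stress F u x y
      = ∫ y in y₁..y₂, -(ρ y * stress F u x y) := intervalIntegral.integral_neg.symm
    _ ≤ ∫ y in y₁..y₂, (A / 2 * pdy u x y + C * (1 - u x y₁)) := by
        refine intervalIntegral.integral_mono_on hy
          (hu.intervalIntegrable_mul_stress hF hρ _ _ _).neg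
          (((continuous_const.mul hpdy).add continuous_const).intervalIntegrable _ _)
          fun y hyI => ?_
        have hstress : -stress F u x y ≤ A / 2 * pdy u x y + C * (1 - u x y₁) :=
          (hu.neg_stress_le hFC x y).trans (by gcongr; exact hu.swap.monotone_fst x hyI.1)
        have hnonneg : 0 ≤ A / 2 * pdy u x y + C * (1 - u x y₁) :=
          add_nonneg (mul_nonneg (by positivity) (hu.pdy_nonneg x y))
            (mul_nonneg hC (sub_nonneg.2 (hu.mem_Icc x y₁).2))
        rw [← mul_neg]
        exact (mul_le_mul_of_nonneg_left hstress (hρI y hyI).1).trans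
          (mul_le_of_le_one_left hnonneg (hρI y hyI).2)
    _ = A / 2 * (u x y₂ - u x y₁) + C * (1 - u x y₁) * (y₂ - y₁) := by
        rw [intervalIntegral.integral_add ((hpdy.intervalIntegrable _ _).const_mul _) (by simp),
          intervalIntegral.integral_const_mul, intervalIntegral.integral_const, smul_eq_mul,
          show ∫ y in y₁..y₂, pdy u x y = u x y₂ - u x y₁ from
            integral_pdx (u := fun x y => u y x) hu.swap.contDiff y₁ y₂ x]
        ring

end WeightedFlux

theorem sq_div_le_integral_pdx_sq (hu : IsMonotoneProfile u A) {x₁ x₂ : ℝ} (hx : x₁ < x₂)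
    (y : ℝ) : (u x₂ y - u x₁ y) ^ 2 / (x₂ - x₁) ≤ ∫ x in x₁..x₂, pdx u x y ^ 2 := by
  have hpos : 0 < x₂ - x₁ := sub_pos.2 hx
  set m := (u x₂ y - u x₁ y) / (x₂ - x₁) with hm
  have hpdx := hu.continuous_pdx_fst y
  calc (u x₂ y - u x₁ y) ^ 2 / (x₂ - x₁)
      = ∫ x in x₁..x₂, (2 * m * pdx u x y - m ^ 2) := by
        rw [intervalIntegral.integral_sub ((hpdx.intervalIntegrable _ _).const_mul _) (by simp),
          intervalIntegral.integral_const_mul, integral_pdx hu.contDiff,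
          intervalIntegral.integral_const, smul_eq_mul, hm]
        field_simp
        ring
    _ ≤ ∫ x in x₁..x₂, pdx u x y ^ 2 :=
        intervalIntegral.integral_mono_on hx.le
          (((continuous_const.mul hpdx).sub continuous_const).intervalIntegrable _ _)
          ((hpdx.pow 2).intervalIntegrable _ _) fun x _ => by
            linarith [sq_nonneg (pdx u x y - m)]

end IsMonotoneProfile

namespace IsSolution

variable {F : ℝ → ℝ} {c : ℝ} {u : ℝ → ℝ → ℝ} {v : ℝ → ℝ} {A C : ℝ}

theorem exists_isMonotoneProfile (hu : IsSolution F c u) (hF : ContDiff ℝ 1 F)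
    (hpdx : ∀ x y, 0 ≤ pdx u x y) : ∃ A, IsMonotoneProfile u A := by
  obtain ⟨K, hK⟩ := isCompact_Icc.exists_bound_of_continuousOn
    (hF.continuous_deriv_one.continuousOn (s := Set.Icc (-1) 1))
  have hsource (x y : ℝ) :
      |pdxx u x y + pdyy u x y + 0 * pdx u x y + c * pdy u x y| ≤ K := by
    rw [zero_mul, add_zero, hu.2.1]
    exact hK _ (hu.mem_Icc x y)
  have hA : 2 * 1 ≤ max (2 * 1) (K + 1) := le_max_left _ _
  have hKA : K < max (2 * 1) (K + 1) := (lt_add_one K).trans_le (le_max_right _ _)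
  exact ⟨max (2 * 1) (K + 1), hu.1.of_le (by norm_num), hu.mem_Icc, hpdx,
    fun x y => (le_abs_self _).trans
      (abs_pdx_le_of_bounded hu.contDiff_two hu.2.2.1 hA hKA hsource x y),
    fun x y => (hu.2.2.2 x y).le,
    fun x y => (le_abs_self _).trans
      (abs_pdy_le_of_bounded hu.contDiff_two hu.2.2.1 hA hKA hsource x y)⟩

section Balance

theorem contDiff_one_pdx (hu : IsSolution F c u) : ContDiff ℝ 1 fun p : ℝ × ℝ => pdx u p.1 p.2 :=
  contDiff_pdx hu.contDiff_two one_add_one_eq_two.le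

theorem contDiff_one_pdy (hu : IsSolution F c u) : ContDiff ℝ 1 fun p : ℝ × ℝ => pdy u p.1 p.2 :=
  contDiff_pdy hu.contDiff_two one_add_one_eq_two.le

theorem hasDerivAt_pdy_fst (hu : IsSolution F c u) (x y : ℝ) :
    HasDerivAt (fun t => pdy u t y) (pdx (pdy u) x y) x :=
  hasDerivAt_pdx (hu.contDiff_one_pdy.differentiable one_ne_zero) x y

theorem hasDerivAt_pdx_snd (hu : IsSolution F c u) (x y : ℝ) :
    HasDerivAt (fun t => pdx u x t) (pdx (pdy u) x y) y := by
  rw [← pdy_pdx_eq_pdx_pdy hu.contDiff_two]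
  exact hasDerivAt_pdy (hu.contDiff_one_pdx.differentiable one_ne_zero) x y

theorem pdx_stress (hu : IsSolution F c u) (hF : Differentiable ℝ F) (x y : ℝ) :
    pdx (stress F u) x y =
      pdx u x y * pdxx u x y - pdy u x y * pdx (pdy u) x y - deriv F (u x y) * pdx u x y := by
  have h := ((((hasDerivAt_pdxx hu.contDiff_two x y).fun_pow 2).div_const 2).fun_sub
    (((hu.hasDerivAt_pdy_fst x y).fun_pow 2).div_const 2)).fun_sub
    ((hF (u x y)).hasDerivAt.comp x
      (hasDerivAt_pdx (hu.contDiff_two.differentiable two_ne_zero) x y))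
  refine h.deriv.trans ?_
  ring

theorem pdy_stress_swap (hu : IsSolution F c u) (hF : Differentiable ℝ F) (x y : ℝ) :
    pdy (fun x y => stress F (fun x y => u y x) y x) x y =
      pdy u x y * pdyy u x y - pdx u x y * pdx (pdy u) x y - deriv F (u x y) * pdy u x y := by
  have h := ((((hasDerivAt_pdyy hu.contDiff_two x y).fun_pow 2).div_const 2).fun_sub
    (((hu.hasDerivAt_pdx_snd x y).fun_pow 2).div_const 2)).fun_sub
    ((hF (u x y)).hasDerivAt.comp y
      (hasDerivAt_pdy (hu.contDiff_two.differentiable two_ne_zero) x y))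
  refine h.deriv.trans ?_
  ring

theorem contDiff_one_stress (hu : IsSolution F c u) (hF : ContDiff ℝ 1 F) :
    ContDiff ℝ 1 fun p : ℝ × ℝ => stress F u p.1 p.2 :=
  (((hu.contDiff_one_pdx.pow 2).div_const 2).sub ((hu.contDiff_one_pdy.pow 2).div_const 2)).sub
    (hF.comp (hu.1.of_le (by norm_num)))

theorem contDiff_one_stress_swap (hu : IsSolution F c u) (hF : ContDiff ℝ 1 F) :
    ContDiff ℝ 1 fun p : ℝ × ℝ => stress F (fun x y => u y x) p.2 p.1 :=
  (((hu.contDiff_one_pdy.pow 2).div_const 2).sub ((hu.contDiff_one_pdx.pow 2).div_const 2)).sub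
    (hF.comp (hu.1.of_le (by norm_num)))

/- The field `e^{cy} (stress, u_x u_y)` is divergence free: test the equation with `e^{cy} u_x`. -/
theorem momentum_balance (hu : IsSolution F c u) (hF : ContDiff ℝ 1 F) (x₁ x₂ y₁ y₂ : ℝ) :
    exp (c * y₂) * (∫ x in x₁..x₂, pdx u x y₂ * pdy u x y₂) =
      exp (c * y₁) * (∫ x in x₁..x₂, pdx u x y₁ * pdy u x y₁) +
      (∫ y in y₁..y₂, exp (c * y) * stress F u x₁ y) -
      ∫ y in y₁..y₂, exp (c * y) * stress F u x₂ y := by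
  have hexp : ContDiff ℝ 1 fun p : ℝ × ℝ => exp (c * p.2) := by fun_prop
  have hdiv := integral_pdx_add_pdy (P := fun x y => exp (c * y) * stress F u x y)
    (Q := fun x y => exp (c * y) * (pdx u x y * pdy u x y))
    (hexp.mul (hu.contDiff_one_stress hF))
    (hexp.mul (hu.contDiff_one_pdx.mul hu.contDiff_one_pdy)) x₁ x₂ y₁ y₂
  have hzero (x y : ℝ) : pdx (fun x y => exp (c * y) * stress F u x y) x y +
      pdy (fun x y => exp (c * y) * (pdx u x y * pdy u x y)) x y = 0 := by
    have hP : pdx (fun x y => exp (c * y) * stress F u x y) x y =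
        exp (c * y) * pdx (stress F u) x y := deriv_const_mul_field _
    have hQ := ((((hasDerivAt_id' y).const_mul c).exp).fun_mul
      ((hu.hasDerivAt_pdx_snd x y).fun_mul (hasDerivAt_pdyy hu.contDiff_two x y))).deriv
    rw [hP, hu.pdx_stress (hF.differentiable one_ne_zero), ← hu.2.1 x y]
    refine (congrArg _ hQ).trans ?_
    ring
  simp only [hzero, intervalIntegral.integral_zero, intervalIntegral.integral_const_mul] at hdiv
  linarith

theorem energy_balance (hu : IsSolution F c u) (hF : ContDiff ℝ 1 F) (x₁ x₂ y₁ y₂ : ℝ) :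
    c * ∫ x in x₁..x₂, ∫ y in y₁..y₂, pdy u x y ^ 2 =
      (∫ x in x₁..x₂, stress F (fun x y => u y x) y₁ x) -
      (∫ x in x₁..x₂, stress F (fun x y => u y x) y₂ x) +
      (∫ y in y₁..y₂, pdx u x₁ y * pdy u x₁ y) - ∫ y in y₁..y₂, pdx u x₂ y * pdy u x₂ y := by
  have hdiv := integral_pdx_add_pdy (P := fun x y => pdx u x y * pdy u x y)
    (Q := fun x y => stress F (fun x y => u y x) y x)
    (hu.contDiff_one_pdx.mul hu.contDiff_one_pdy) (hu.contDiff_one_stress_swap hF) x₁ x₂ y₁ y₂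
  have hdissipation (x y : ℝ) : pdx (fun x y => pdx u x y * pdy u x y) x y +
      pdy (fun x y => stress F (fun x y => u y x) y x) x y = -c * pdy u x y ^ 2 := by
    have hP := ((hasDerivAt_pdxx hu.contDiff_two x y).fun_mul (hu.hasDerivAt_pdy_fst x y)).deriv
    rw [hu.pdy_stress_swap (hF.differentiable one_ne_zero), ← hu.2.1 x y]
    refine (congrArg (· + _) hP).trans ?_
    ring
  simp only [hdissipation, intervalIntegral.integral_const_mul] at hdiv
  linarith

end Balance

theorem integral_pdx_mul_pdy_le_of_momentum (hu : IsSolution F c u) (hF : ContDiff ℝ 1 F)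
    (hF₀ : ∀ s ∈ Set.Icc (-1 : ℝ) 1, 0 ≤ F s) (hC : 0 ≤ C)
    (hFC : ∀ s ∈ Set.Icc (-1 : ℝ) 1, F s ≤ C * (1 - s)) (hc : 0 ≤ c) (hA : IsMonotoneProfile u A)
    {x₁ x₂ y : ℝ} (hx : x₁ ≤ x₂) (hy : y ≤ 0) :
    ∫ x in x₁..x₂, pdx u x 0 * pdy u x 0 ≤ exp (c * y) * (2 * A) +
      (A / 2 * ∫ t in y..0, pdx u x₁ t) + (A / 2 - C * y) * (1 - u x₂ y) := by
  have hbalance := hu.momentum_balance hF x₁ x₂ y 0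
  rw [mul_zero, exp_zero, one_mul] at hbalance
  have hweight : Continuous fun t => exp (c * t) := by fun_prop
  have hweight_mem (t : ℝ) (ht : t ∈ Set.Icc y 0) : exp (c * t) ∈ Set.Icc 0 1 :=
    ⟨(exp_pos _).le, exp_le_one_iff.2 (mul_nonpos_of_nonneg_of_nonpos hc ht.2)⟩
  have hbottom := mul_le_mul_of_nonneg_left (hA.integral_pdx_mul_pdy_le hx y) (exp_pos (c * y)).le
  have hleft := hA.integral_mul_stress_le hF.continuous hF₀ hweight hy hweight_mem x₁
  have hright := hA.neg_integral_mul_stress_le hF.continuous hC hFC hweight hy hweight_mem x₂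
  have hcorner : A / 2 * (u x₂ 0 - u x₂ y) ≤ A / 2 * (1 - u x₂ y) :=
    mul_le_mul_of_nonneg_left (sub_le_sub_right (hA.mem_Icc x₂ 0).2 _)
      (div_nonneg hA.bound_nonneg zero_le_two)
  linarith

theorem integral_pdx_mul_pdy_pos (hu : IsSolution F c u) {x₁ x₂ y : ℝ} (hx : x₁ ≤ x₂)
    (hpdx : ∀ x, 0 ≤ pdx u x y) (hlt : u x₁ y < u x₂ y) :
    0 < ∫ x in x₁..x₂, pdx u x y * pdy u x y := by
  have hcont_pdx : Continuous fun x => pdx u x y :=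
    hu.contDiff_one_pdx.continuous.comp (Continuous.prodMk_left y)
  have hcont_pdy : Continuous fun x => pdy u x y :=
    hu.contDiff_one_pdy.continuous.comp (Continuous.prodMk_left y)
  obtain ⟨t, -, ht⟩ := isCompact_Icc.exists_isMinOn (Set.nonempty_Icc.2 hx) hcont_pdy.continuousOn
  calc 0 < (u x₂ y - u x₁ y) * pdy u t y := mul_pos (sub_pos.2 hlt) (hu.2.2.2 t y)
    _ = ∫ x in x₁..x₂, pdx u x y * pdy u t y := by
        rw [intervalIntegral.integral_mul_const, integral_pdx (hu.1.of_le (by norm_num))]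
    _ ≤ ∫ x in x₁..x₂, pdx u x y * pdy u x y :=
        intervalIntegral.integral_mono_on hx
          ((hcont_pdx.mul continuous_const).intervalIntegrable _ _)
          ((hcont_pdx.mul hcont_pdy).intervalIntegrable _ _)
          fun x hxI => mul_le_mul_of_nonneg_left (ht hxI) (hpdx x)

theorem integral_pdx_mul_pdy_le_of_tendsto_one (hu : IsSolution F c u) (hF : ContDiff ℝ 1 F)
    (hF₀ : ∀ s ∈ Set.Icc (-1 : ℝ) 1, 0 ≤ F s) (hF_one : F 1 = 0) (hc : 0 ≤ c)
    (hA : IsMonotoneProfile u A) (hlim : ∀ y, Tendsto (fun x => u x y) atTop (nhds 1))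
    {x₁ x₂ y : ℝ} (hx : x₁ ≤ x₂) (hy : y ≤ 0) :
    ∫ x in x₁..x₂, pdx u x 0 * pdy u x 0 ≤ exp (c * y) * (2 * A) := by
  obtain ⟨C, hC, hFC⟩ := exists_le_mul_one_sub hF hF_one
  set p := ∫ x in x₁..x₂, pdx u x 0 * pdy u x 0
  have hwiden {r l : ℝ} (hl : l ≤ x₁) (hr : x₂ ≤ r) :
      p ≤ ∫ x in l..r, pdx u x 0 * pdy u x 0 :=
    intervalIntegral.integral_mono_interval hl hx hr
      (.of_forall fun x => mul_nonneg (hA.pdx_nonneg x 0) (hA.pdy_nonneg x 0))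
      (hA.intervalIntegrable_pdx_mul_pdy _ _ _)
  have hright {l : ℝ} (hl : l ≤ x₁) :
      p ≤ exp (c * y) * (2 * A) + (A / 2 * ∫ t in y..0, pdx u l t) := by
    have htend : Tendsto (fun r => exp (c * y) * (2 * A) + (A / 2 * ∫ t in y..0, pdx u l t) +
        (A / 2 - C * y) * (1 - u r y)) atTop
        (nhds (exp (c * y) * (2 * A) + (A / 2 * ∫ t in y..0, pdx u l t))) := by
      simpa using (((hlim y).const_sub 1).const_mul (A / 2 - C * y)).const_add
        (exp (c * y) * (2 * A) + (A / 2 * ∫ t in y..0, pdx u l t))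
    refine ge_of_tendsto htend ((eventually_ge_atTop x₂).mono fun r hr => ?_)
    exact (hwiden hl hr).trans (hu.integral_pdx_mul_pdy_le_of_momentum hF hF₀ hC hFC hc hA
      (hl.trans (hx.trans hr)) hy)
  refine le_of_forall_pos_lt_add fun ε hε => ?_
  obtain ⟨η, hη, hAη⟩ := exists_pos_mul_lt hε (A / 2)
  obtain ⟨l, hl, hslice⟩ := exists_integral_pdx_lt hA.contDiff hu.2.2.1 hη x₁ y 0
  have := mul_le_mul_of_nonneg_left hslice.le (div_nonneg hA.bound_nonneg zero_le_two)
  linarith [hright hl]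

theorem not_forall_tendsto_one_atTop (hu : IsSolution F c u) (hF : ContDiff ℝ 1 F)
    (hF₀ : ∀ s ∈ Set.Icc (-1 : ℝ) 1, 0 ≤ F s) (hF_one : F 1 = 0) (hc : 0 < c)
    (hpdx : ∀ x y, 0 ≤ pdx u x y) : ¬ ∀ y, Tendsto (fun x => u x y) atTop (nhds 1) := by
  intro hlim
  obtain ⟨A, hA⟩ := hu.exists_isMonotoneProfile hF hpdx
  have hlt_one : u 0 0 < 1 := (hu.strictMono 0 one_pos).trans_le (hA.mem_Icc 0 1).2
  obtain ⟨X, hX, hX₀⟩ :=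
    (((hlim 0).eventually_const_lt hlt_one).and (eventually_ge_atTop 0)).exists
  have hexp : Tendsto (fun y => exp (c * y) * (2 * A)) atBot (nhds 0) := by
    simpa using (tendsto_exp_atBot.comp (tendsto_id.const_mul_atBot hc)).mul_const (2 * A)
  refine (hu.integral_pdx_mul_pdy_pos hX₀ (fun x => hpdx x 0) hX).not_ge ?_
  exact ge_of_tendsto hexp ((eventually_le_atBot 0).mono fun y hy =>
    hu.integral_pdx_mul_pdy_le_of_tendsto_one hF hF₀ hF_one hc.le hA hlim hX₀ hy)

theorem integral_integral_pdy_sq_le_of_energy (hu : IsSolution F c u) (hF : ContDiff ℝ 1 F)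
    (hF₀ : ∀ s ∈ Set.Icc (-1 : ℝ) 1, 0 ≤ F s) (hC : 0 ≤ C)
    (hFC : ∀ s ∈ Set.Icc (-1 : ℝ) 1, F s ≤ C * (1 - s)) (hA : IsMonotoneProfile u A)
    {x₁ x₂ y₁ y₂ : ℝ} (hx : x₁ ≤ x₂) (hy : y₁ ≤ y₂) :
    c * ∫ x in x₁..x₂, ∫ y in y₁..y₂, pdy u x y ^ 2 ≤
      (A / 2 * ∫ x in x₁..x₂, pdy u x y₁) + C * (1 - u x₁ y₂) * (x₂ - x₁) + 3 * A := by
  have hone (x : ℝ) (_ : x ∈ Set.Icc x₁ x₂) : (1 : ℝ) ∈ Set.Icc 0 1 := ⟨zero_le_one, le_rfl⟩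
  have hbottom : ∫ x in x₁..x₂, stress F (fun x y => u y x) y₁ x ≤
      A / 2 * ∫ x in x₁..x₂, pdy u x y₁ := by
    have hflux := hA.swap.integral_mul_stress_le hF.continuous hF₀ continuous_const hx hone y₁
    simp only [one_mul] at hflux
    exact hflux
  have htop : -∫ x in x₁..x₂, stress F (fun x y => u y x) y₂ x ≤
      A / 2 * (u x₂ y₂ - u x₁ y₂) + C * (1 - u x₁ y₂) * (x₂ - x₁) := by
    simpa only [one_mul] using
      hA.swap.neg_integral_mul_stress_le hF.continuous hC hFC continuous_const hx hone y₂
  have hleft : ∫ y in y₁..y₂, pdx u x₁ y * pdy u x₁ y ≤ 2 * A := by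
    simp only [mul_comm (pdx u x₁ _)]
    exact hA.swap.integral_pdx_mul_pdy_le hy x₁
  have hright : 0 ≤ ∫ y in y₁..y₂, pdx u x₂ y * pdy u x₂ y :=
    intervalIntegral.integral_nonneg hy fun y _ =>
      mul_nonneg (hA.pdx_nonneg x₂ y) (hA.pdy_nonneg x₂ y)
  have hcorner : A / 2 * (u x₂ y₂ - u x₁ y₂) ≤ A / 2 * 2 :=
    mul_le_mul_of_nonneg_left (hA.sub_le_two _ _ _ _) (div_nonneg hA.bound_nonneg zero_le_two)
  linarith [hu.energy_balance hF x₁ x₂ y₁ y₂]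

theorem mul_sub_le_of_gap (hu : IsSolution F c u) (hF : ContDiff ℝ 1 F)
    (hF₀ : ∀ s ∈ Set.Icc (-1 : ℝ) 1, 0 ≤ F s) (hC : 0 ≤ C)
    (hFC : ∀ s ∈ Set.Icc (-1 : ℝ) 1, F s ≤ C * (1 - s)) (hc : 0 ≤ c) (hA : IsMonotoneProfile u A)
    {d x₁ x₂ y₀ y₂ y₃ : ℝ} (hx : x₁ ≤ x₂) (hy : y₀ < y₂) (hy₂₃ : y₂ ≤ y₃)
    (hd : 0 ≤ d) (hgap : ∀ x ∈ Set.Icc x₁ x₂, d ≤ u x y₂ - u x y₀) :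
    c * (d ^ 2 / (y₂ - y₀)) * (x₂ - x₁) ≤ 3 * A + C * (1 - u x₁ y₃) * (x₂ - x₁) := by
  have hsq : Continuous fun p : ℝ × ℝ => pdy u p.1 p.2 ^ 2 := (continuous_pdy hA.contDiff).pow 2
  have hdissipation {y₁ : ℝ} (hy₁ : y₁ ≤ y₀) : d ^ 2 / (y₂ - y₀) * (x₂ - x₁) ≤
      ∫ x in x₁..x₂, ∫ y in y₁..y₃, pdy u x y ^ 2 := by
    rw [mul_comm, ← smul_eq_mul, ← intervalIntegral.integral_const]
    refine intervalIntegral.integral_mono_on hx (by simp)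
      ((intervalIntegral.continuous_parametric_intervalIntegral_of_continuous' hsq _
        _).intervalIntegrable _ _) fun x hxI => ?_
    calc d ^ 2 / (y₂ - y₀) ≤ (u x y₂ - u x y₀) ^ 2 / (y₂ - y₀) := by
          have := sub_pos.2 hy
          gcongr
          exact hgap x hxI
      _ ≤ ∫ y in y₀..y₂, pdy u x y ^ 2 := hA.swap.sq_div_le_integral_pdx_sq hy x
      _ ≤ ∫ y in y₁..y₃, pdy u x y ^ 2 :=
          intervalIntegral.integral_mono_interval hy₁ hy.le hy₂₃ (.of_forall fun y => sq_nonneg _)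
            ((hsq.comp (Continuous.prodMk_right x)).intervalIntegrable _ _)
  refine le_of_forall_pos_lt_add fun ε hε => ?_
  obtain ⟨η, hη, hAη⟩ := exists_pos_mul_lt hε (A / 2)
  obtain ⟨y₁, hy₁, hslice⟩ := exists_integral_pdx_lt hA.swap.contDiff
    (fun x y => hu.2.2.1 y x) hη y₀ x₁ x₂
  have hbottom : A / 2 * ∫ x in x₁..x₂, pdy u x y₁ ≤ A / 2 * η :=
    mul_le_mul_of_nonneg_left hslice.le (div_nonneg hA.bound_nonneg zero_le_two)
  have henergy := hu.integral_integral_pdy_sq_le_of_energy hF hF₀ hC hFC hA hx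
    (hy₁.trans (hy.le.trans hy₂₃))
  linarith [mul_le_mul_of_nonneg_left (hdissipation hy₁) hc]

theorem not_forall_gap_of_upper_limit (hu : IsSolution F c u) (hF : ContDiff ℝ 1 F)
    (hF₀ : ∀ s ∈ Set.Icc (-1 : ℝ) 1, 0 ≤ F s) (hF_one : F 1 = 0) (hc : 0 < c)
    (hA : IsMonotoneProfile u A) (hv : ∀ x, Tendsto (fun y => u x y) atTop (nhds (v x)))
    (hv_one : Tendsto v atTop (nhds 1)) {d X y₀ y₂ : ℝ} (hd : 0 < d) (hy : y₀ < y₂) :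
    ¬ ∀ x, X ≤ x → d ≤ u x y₂ - u x y₀ := by
  intro hgap
  obtain ⟨C, hC, hFC⟩ := exists_le_mul_one_sub hF hF_one
  set γ := c * (d ^ 2 / (y₂ - y₀))
  have hγ : 0 < γ := mul_pos hc (div_pos (pow_pos hd 2) (sub_pos.2 hy))
  have hbound {x L : ℝ} (hx : X ≤ x) (hL : 0 ≤ L) : γ * L ≤ 3 * A + C * (1 - v x) * L := by
    refine ge_of_tendsto (((((hv x).const_sub 1).const_mul C).mul_const L).const_add (3 * A))
      ((eventually_ge_atTop y₂).mono fun y₃ hy₃ => ?_)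
    have hestimate := hu.mul_sub_le_of_gap hF hF₀ hC hFC hc.le hA (le_add_of_nonneg_right hL) hy
      hy₃ hd.le fun t ht => hgap t (hx.trans ht.1)
    rwa [add_sub_cancel_left] at hestimate
  have huniform {L : ℝ} (hL : 0 ≤ L) : γ * L ≤ 3 * A := by
    have htend : Tendsto (fun x => 3 * A + C * (1 - v x) * L) atTop (nhds (3 * A)) := by
      simpa using (((hv_one.const_sub 1).const_mul C).mul_const L).const_add (3 * A)
    exact ge_of_tendsto htend ((eventually_ge_atTop X).mono fun x hx => hbound hx hL)
  have hlong := huniform (L := (3 * A + 1) / γ)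
    (div_nonneg (by linarith [hA.bound_nonneg]) hγ.le)
  rw [mul_div_cancel₀ _ hγ.ne'] at hlong
  linarith

theorem tendsto_one_of_upper_limit (hu : IsSolution F c u) (hF : ContDiff ℝ 1 F)
    (hF₀ : ∀ s ∈ Set.Icc (-1 : ℝ) 1, 0 ≤ F s) (hF_one : F 1 = 0) (hc : 0 < c)
    (hpdx : ∀ x y, 0 ≤ pdx u x y) (hv : ∀ x, Tendsto (fun y => u x y) atTop (nhds (v x)))
    (hv_one : Tendsto v atTop (nhds 1)) (y : ℝ) : Tendsto (fun x => u x y) atTop (nhds 1) := by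
  obtain ⟨A, hA⟩ := hu.exists_isMonotoneProfile hF hpdx
  refine tendsto_order.2 ⟨fun a ha => ?_, fun a ha =>
    .of_forall fun x => (hA.mem_Icc x y).2.trans_lt ha⟩
  by_contra hnot
  have hle (x : ℝ) : u x y ≤ a := le_of_not_gt fun h =>
    hnot ((eventually_ge_atTop x).mono fun _ hx => h.trans_le (hA.monotone_fst y hx))
  obtain ⟨X, hX⟩ := (hv_one.eventually_const_lt (by linarith : (1 + a) / 2 < 1)).exists
  obtain ⟨y₂, hy₂, hy⟩ := (((hv X).eventually_const_lt hX).and (eventually_gt_atTop y)).exists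
  refine hu.not_forall_gap_of_upper_limit hF hF₀ hF_one hc hA hv hv_one (d := (1 - a) / 2) (X := X)
    (by linarith) hy fun x hx => ?_
  linarith [hle x, hA.monotone_fst y₂ hx]

theorem not_isFrontPair {w : ℝ → ℝ} (hu : IsSolution F c u) (hF : ContDiff ℝ 2 F)
    (hF₀ : ∀ s ∈ Set.Icc (-1 : ℝ) 1, 0 ≤ F s) (hF_one : F 1 = 0)
    (hF''_neg : 0 < deriv (deriv F) (-1)) (hF''_pos : 0 < deriv (deriv F) 1) (hc : 0 < c)
    (hv : ∀ x, Tendsto (fun y => u x y) atTop (nhds (v x)))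
    (hw : ∀ x, Tendsto (fun y => u x y) atBot (nhds (w x))) : ¬ IsFrontPair v w := by
  intro hvw
  have hF₁ : ContDiff ℝ 1 F := hF.of_le one_le_two
  have hpdx := hu.pdx_nonneg_of_isFrontPair hF hF''_neg hF''_pos hv hw hvw
  refine hu.not_forall_tendsto_one_atTop hF₁ hF₀ hF_one hc hpdx fun y => ?_
  rcases hvw with ⟨hvf, -⟩ | ⟨-, hwf⟩
  · exact hu.tendsto_one_of_upper_limit hF₁ hF₀ hF_one hc hpdx hv hvf.tendsto_atTop y
  · exact tendsto_of_tendsto_of_tendsto_of_le_of_le hwf.tendsto_atTop tendsto_const_nhds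
      (fun x => hu.lower_limit_le hw x y) fun x => (abs_le.1 (hu.2.2.1 x y)).2

end IsSolution

theorem eq_const_of_deriv_eq_zero_of_equilibrium {f g : ℝ → ℝ} (hf : ContDiff ℝ 1 f)
    (hg : ContDiff ℝ 2 g) (hgeq : ∀ s, deriv (deriv g) s = f (g s)) {s₀ : ℝ}
    (hf₀ : f (g s₀) = 0) (hd₀ : deriv g s₀ = 0) (s : ℝ) : g s = g s₀ := by
  let field (p : ℝ × ℝ) : ℝ × ℝ := (p.2, f p.1)
  have hfield : ContDiff ℝ 1 field := contDiff_snd.prodMk (hf.comp contDiff_fst)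
  have hphase (s : ℝ) : HasDerivAt (fun s => (g s, deriv g s)) (field (g s, deriv g s)) s :=
    (hg.differentiable two_ne_zero s).hasDerivAt.prodMk
      ((hg.differentiable_deriv_two s).hasDerivAt.congr_deriv (hgeq s))
  have hcont : Continuous fun s => (g s, deriv g s) :=
    continuous_iff_continuousAt.2 fun s => (hphase s).continuousAt
  have hrest (s : ℝ) : HasDerivAt (fun _ : ℝ => (g s₀, (0 : ℝ))) (field (g s₀, 0)) s :=
    (hasDerivAt_const s _).congr_deriv (by simp only [field, hf₀]; rfl)
  have hopen : IsOpen {s | (g s, deriv g s) = (g s₀, 0)} := by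
    refine isOpen_iff_mem_nhds.2 fun t ht => ?_
    obtain ⟨K, U, hU, hK⟩ := hfield.contDiffAt (x := (g s₀, 0)).exists_lipschitzOnWith
    have hnear : ∀ᶠ s in nhds t, (g s, deriv g s) ∈ U :=
      hcont.continuousAt.eventually_mem (by rwa [show (g t, deriv g t) = (g s₀, 0) from ht])
    exact ODE_solution_unique_of_eventually (v := fun _ => field) (s := fun _ => U)
      (.of_forall fun _ => hK) (hnear.mono fun s hs => ⟨hphase s, hs⟩)
      (.of_forall fun s => ⟨hrest s, mem_of_mem_nhds hU⟩) ht
  have huniv := IsClopen.eq_univ ⟨isClosed_eq hcont continuous_const, hopen⟩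
    ⟨s₀, congrArg (g s₀, ·) hd₀⟩
  exact congrArg Prod.fst (huniv.ge (Set.mem_univ s))

theorem exists_tendsto_deriv_zero_of_tendsto {g : ℝ → ℝ} {a : ℝ} (hg : Differentiable ℝ g)
    (hga : Tendsto g atTop (nhds a)) :
    ∃ ξ : ℕ → ℝ, Tendsto ξ atTop atTop ∧ Tendsto (fun n => deriv g (ξ n)) atTop (nhds 0) := by
  have hslope (n : ℕ) : ∃ t ∈ Set.Ioo (n : ℝ) (n + 1), deriv g t = g (n + 1) - g n := by
    simpa using exists_deriv_eq_slope g (lt_add_one (n : ℝ)) hg.continuous.continuousOn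
      hg.differentiableOn
  choose ξ hξ hderiv using hslope
  have hcast : Tendsto (fun n : ℕ => (n : ℝ)) atTop atTop := tendsto_natCast_atTop_atTop
  refine ⟨ξ, tendsto_atTop_mono (fun n => (hξ n).1.le) hcast, ?_⟩
  simp only [hderiv]
  simpa using (hga.comp (tendsto_atTop_add_const_right _ 1 hcast)).sub (hga.comp hcast)

theorem deriv_sq_eq_of_tendsto {F g : ℝ → ℝ} {a : ℝ} (hF : ContDiff ℝ 1 F) (hg : ContDiff ℝ 2 g)
    (hgeq : ∀ s, deriv (deriv g) s = deriv F (g s)) (hga : Tendsto g atTop (nhds a)) (s : ℝ) :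
    deriv g s ^ 2 = 2 * (F (g s) - F a) := by
  have hd (s : ℝ) : HasDerivAt (fun s => deriv g s ^ 2 - 2 * F (g s)) 0 s := by
    have hg' := (hg.differentiable two_ne_zero s).hasDerivAt
    have hg'' := (hg.differentiable_deriv_two s).hasDerivAt
    have hF' := (hF.differentiable one_ne_zero (g s)).hasDerivAt
    refine ((hg''.fun_pow 2).fun_sub ((hF'.comp s hg').const_mul 2)).congr_deriv ?_
    rw [hgeq]
    ring
  have hconst := is_const_of_deriv_eq_zero (fun s => (hd s).differentiableAt) fun s => (hd s).deriv
  obtain ⟨ξ, hξ, hderiv⟩ :=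
    exists_tendsto_deriv_zero_of_tendsto (hg.differentiable two_ne_zero) hga
  have hlim := (hderiv.pow 2).sub
    (((hF.continuous.tendsto a).comp (hga.comp hξ)).const_mul 2)
  have heq := tendsto_nhds_unique (tendsto_const_nhds.congr fun n => hconst s (ξ n)) hlim
  linarith

theorem mem_Ioo_of_forall_ne {g : ℝ → ℝ} {a b : ℝ} (hg : Continuous g) (ha : ∀ s, g s ≠ a)
    (hb : ∀ s, g s ≠ b) {s₀ : ℝ} (hs₀ : g s₀ ∈ Set.Ioo a b) (s : ℝ) : g s ∈ Set.Ioo a b := by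
  refine ⟨lt_of_not_ge fun h => ?_, lt_of_not_ge fun h => ?_⟩
  · obtain ⟨t, ht⟩ := mem_range_of_exists_le_of_exists_ge hg ⟨s, h⟩ ⟨s₀, hs₀.1.le⟩
    exact ha t ht
  · obtain ⟨t, ht⟩ := mem_range_of_exists_le_of_exists_ge hg ⟨s₀, hs₀.2.le⟩ ⟨s, h⟩
    exact hb t ht

theorem strictMono_of_forall_deriv_ne_zero {g : ℝ → ℝ} (hg : ∀ s, deriv g s ≠ 0) {s t : ℝ}
    (hst : s < t) (h : g s < g t) : StrictMono g := by
  have hd (s : ℝ) : HasDerivWithinAt g (deriv g s) Set.univ s :=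
    (differentiableAt_of_deriv_ne_zero (hg s)).hasDerivAt.hasDerivWithinAt
  rcases hasDerivWithinAt_forall_lt_or_forall_gt_of_forall_ne convex_univ (fun s _ => hd s)
    (fun s _ => hg s) with hneg | hpos
  · exact absurd (strictAnti_of_deriv_neg (fun s => hneg s trivial) hst) h.not_gt
  · exact strictMono_of_deriv_pos fun s => hpos s trivial

namespace BalancedDoubleWell

variable {F g : ℝ → ℝ}

theorem pos (hF : BalancedDoubleWell F) {s : ℝ} (hs : s ∈ Set.Ioo (-1 : ℝ) 1) : 0 < F s := by
  obtain ⟨hF₃, -, -, -, -, hpos, hneg, hF_neg_one, hF_one⟩ := hF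
  rcases le_total s 0 with h | h
  · rw [← hF_neg_one]
    exact strictMonoOn_of_deriv_pos (convex_Icc (-1 : ℝ) 0) hF₃.continuous.continuousOn
      (by rwa [interior_Icc])
      ⟨le_rfl, by norm_num⟩ ⟨hs.1.le, h⟩ hs.1
  · rw [← hF_one]
    exact strictAntiOn_of_deriv_neg (convex_Icc (0 : ℝ) 1) hF₃.continuous.continuousOn
      (by rwa [interior_Icc])
      ⟨h, hs.2.le⟩ ⟨zero_le_one, le_rfl⟩ hs.2

theorem nonneg (hF : BalancedDoubleWell F) {s : ℝ} (hs : s ∈ Set.Icc (-1 : ℝ) 1) : 0 ≤ F s := by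
  rcases Set.eq_endpoints_or_mem_Ioo_of_mem_Icc hs with rfl | rfl | hs
  · exact hF.2.2.2.2.2.2.2.1.ge
  · exact hF.2.2.2.2.2.2.2.2.ge
  · exact (hF.pos hs).le

theorem isFront_of_standing_wave (hF : BalancedDoubleWell F) (hg : ContDiff ℝ 2 g)
    (hgeq : ∀ s, deriv (deriv g) s = deriv F (g s)) (hgtop : Tendsto g atTop (nhds 1))
    (hgbot : Tendsto g atBot (nhds (-1))) {s₀ : ℝ} (hs₀ : g s₀ ∈ Set.Ioo (-1 : ℝ) 1) :
    IsFront g := by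
  have ⟨hF₃, hF'_neg_one, hF'_one, _, _, _, _, hF_neg_one, hF_one⟩ := hF
  have henergy (s : ℝ) : deriv g s ^ 2 = 2 * F (g s) := by
    rw [deriv_sq_eq_of_tendsto (hF₃.of_le (by norm_num)) hg hgeq hgtop, hF_one, sub_zero]
  have hne {p : ℝ} (hp : p ∉ Set.Ioo (-1 : ℝ) 1) (hFp : F p = 0) (hF'p : deriv F p = 0)
      (s : ℝ) : g s ≠ p := by
    rintro rfl
    refine hp (eq_const_of_deriv_eq_zero_of_equilibrium
      (contDiff_one_deriv (hF₃.of_le (by norm_num))) hg hgeq hF'p ?_ s₀ ▸ hs₀)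
    rw [← sq_eq_zero_iff, henergy, hFp, mul_zero]
  have hmem (s : ℝ) : g s ∈ Set.Ioo (-1 : ℝ) 1 :=
    mem_Ioo_of_forall_ne hg.continuous (hne (by simp) hF_neg_one hF'_neg_one)
      (hne (by simp) hF_one hF'_one) hs₀ s
  have hderiv (s : ℝ) : deriv g s ≠ 0 := fun h => by
    have := henergy s
    rw [h] at this
    linarith [hF.pos (hmem s)]
  obtain ⟨t, ht, hst⟩ := ((hgtop.eventually_const_lt hs₀.2).and (eventually_gt_atTop s₀)).exists
  exact ⟨hg.continuous, strictMono_of_forall_deriv_ne_zero hderiv hst ht, hgbot, hgtop⟩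

end BalancedDoubleWell

theorem no_wave_connecting_standing_profile_general {F : ℝ → ℝ} {c : ℝ} {u : ℝ → ℝ → ℝ}
    {v w : ℝ → ℝ} (hF : ContDiff ℝ 2 F) (hF₀ : ∀ s ∈ Set.Icc (-1 : ℝ) 1, 0 ≤ F s)
    (hF_one : F 1 = 0) (hF''_neg : 0 < deriv (deriv F) (-1)) (hF''_pos : 0 < deriv (deriv F) 1)
    (hc : 0 < c) (hu : IsSolution F c u)
    (hv : ∀ x, Tendsto (fun y => u x y) atTop (nhds (v x)))
    (hw : ∀ x, Tendsto (fun y => u x y) atBot (nhds (w x))) :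
    ¬ (IsFrontPair v w ∨ IsFrontPair (fun x => v (-x)) fun x => w (-x)) := by
  rintro (h | h)
  · exact hu.not_isFrontPair hF hF₀ hF_one hF''_neg hF''_pos hc hv hw h
  · exact hu.reflect.not_isFrontPair hF hF₀ hF_one hF''_neg hF''_pos hc
      (fun x => hv (-x)) (fun x => hw (-x)) h

/-- Nonexistence of monotone traveling waves of the balanced Allen-Cahn
equation connecting a one-dimensional standing wave profile (Theorem 4.1):
none of the six limit configurations involving a reflection/translation of
`g` can occur. -/
theorem no_wave_connecting_standing_profile
    (F : ℝ → ℝ) (hF : BalancedDoubleWell F)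
    (g : ℝ → ℝ) (hg : ContDiff ℝ 3 g)
    (hgeq : ∀ s : ℝ, deriv (deriv g) s = deriv F (g s))
    (hgtop : Tendsto g atTop (nhds 1)) (hgbot : Tendsto g atBot (nhds (-1)))
    (hg0 : g 0 = 0)
    (c : ℝ) (hc : 0 < c) :
    ¬ ∃ (u : ℝ → ℝ → ℝ) (uP uM : ℝ → ℝ),
      IsSolution F c u ∧
      (∀ x : ℝ, Tendsto (fun y => u x y) atTop (nhds (uP x))) ∧
      (∀ x : ℝ, Tendsto (fun y => u x y) atBot (nhds (uM x))) ∧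
      ((∃ K₁ : ℝ, (∀ x, uP x = g (x - K₁)) ∧ (∀ x, uM x = -1)) ∨
       (∃ K₁ : ℝ, (∀ x, uP x = g (K₁ - x)) ∧ (∀ x, uM x = -1)) ∨
       (∃ K₂ : ℝ, (∀ x, uP x = 1) ∧ (∀ x, uM x = g (x - K₂))) ∨
       (∃ K₂ : ℝ, (∀ x, uP x = 1) ∧ (∀ x, uM x = g (K₂ - x))) ∨
       (∃ K₁ K₂ : ℝ, K₁ < K₂ ∧
         (∀ x, uP x = g (x - K₁)) ∧ (∀ x, uM x = g (x - K₂))) ∨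
       (∃ K₁ K₂ : ℝ, K₂ < K₁ ∧
         (∀ x, uP x = g (K₁ - x)) ∧ (∀ x, uM x = g (K₂ - x)))) := by
  rintro ⟨u, uP, uM, hu, hP, hM, hconfig⟩
  have hgf := hF.isFront_of_standing_wave (hg.of_le (by norm_num)) hgeq hgtop hgbot (s₀ := 0)
    (by simp [hg0])
  have ⟨hF₃, _, _, hF''_neg, hF''_pos, _, _, _, hF_one⟩ := hF
  refine no_wave_connecting_standing_profile_general (hF₃.of_le (by norm_num))
    (fun s hs => hF.nonneg hs) hF_one hF''_neg hF''_pos hc hu hP hM ?_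
  have hright {v : ℝ → ℝ} {K : ℝ} (hv : ∀ x, v x = g (x - K)) : IsFront v :=
    (funext hv : v = _) ▸ hgf.translate K
  have hleft {v : ℝ → ℝ} {K : ℝ} (hv : ∀ x, v x = g (K - x)) : IsFront fun x => v (-x) :=
    hright (K := -K) fun x => by rw [hv]; ring_nf
  rcases hconfig with ⟨K, hP, hM⟩ | ⟨K, hP, hM⟩ | ⟨K, hP, hM⟩ | ⟨K, hP, hM⟩ |
    ⟨K₁, K₂, -, hP, hM⟩ | ⟨K₁, K₂, -, hP, hM⟩
  · exact .inl (.inl ⟨hright hP, .inr hM⟩)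
  · exact .inr (.inl ⟨hleft hP, .inr fun x => hM (-x)⟩)
  · exact .inl (.inr ⟨hP, hright hM⟩)
  · exact .inr (.inr ⟨fun x => hP (-x), hleft hM⟩)
  · exact .inl (.inl ⟨hright hP, .inl (hright hM)⟩)
  · exact .inr (.inl ⟨hleft hP, .inl (hleft hM)⟩)
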